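/- There exists a complex number ρ₀ with 0.85 < Re(ρ₀) < 0.95 and 2.0 < Im(ρ₀) < 2.2 such that the set of zeros of f₁ in the closed right half-plane Re(s) ≥ 1/2 is exactly {1, ρ₀, conj(ρ₀)}, and each of these three zeros is simple (the derivative of f₁ does not vanish there). -/

import Mathlib

open Complex

noncomputable def chi (s : ℂ) : ℂ := s * (s - 1) * completedRiemannZeta₀ s + 1

noncomputable def A : ℂ := Real.pi / 3 - 1

noncomputable def f1 (s : ℂ) : ℂ :=
  (s - 1) * ((s - 1) * (3 * s - 2) * (A * s - A + 1) * chi (s + 1) * chi (3 * s)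
    - (s + 1) * (s - 2) * chi s * chi (3 * s - 1)
    - 2 * (s - 1) * (s - 2) * chi s * chi (3 * s))

noncomputable def f2 (s : ℂ) : ℂ :=
  (s - 2) * ((A * s + 3) * (s - 1) ^ 2 * chi (s + 2)
    - 2 * (s - 1) * (s - 3) * chi (s + 1)
    - (s + 2) * (s - 3) * chi s)

noncomputable def Z1 (s : ℂ) : ℂ := chi (2 * s) * f1 s - chi (2 * s - 1) * f1 (1 - s)

noncomputable def Z2 (s : ℂ) : ℂ := chi (2 * s) * f2 s - chi (2 * s - 1) * f2 (1 - s)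

/-!
On `Re s ≥ 1 / 2` the functions `chi (s + 1)` and `chi (3 * s)` have no zeros, so the zeros of `f1`
there are `1` and those of `F s = f1 s / ((s - 1) * chi (s + 1) * chi (3 * s))`, a cubic polynomial
in `s` whose coefficients involve only the ratios `chi s / chi (s + 1)` and
`chi (3 * s - 1) / chi (3 * s)`. By Phragmén–Lindelöf and the functional equation these ratios have
absolute value at most `1`, and Schwarz–Pick turns a value at one point into a bound at every other.
The values come from `completedRiemannZeta₀ (1 / 2 + w)`, which is a power series in `w ^ 2` with
nonnegative coefficients: the remainder of its Newton interpolation at `s = 2, ..., 10` is therefore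
controlled by its value at a single real point, and the rest is interval arithmetic with dyadic
discs.

An open mapping argument in a small disc gives a zero `ρ` of `F` near `0.90 + 2.09 * I`, and by
symmetry `conj ρ` is another one. On the line `Re s = 1 / 2` the quotient of `F s` by
`(s - ρ) * (s - conj ρ) * (s + 5)` has positive real part. It is holomorphic and bounded in the
half-plane, so by Phragmén–Lindelöf its real part is nonnegative there, and by the maximum principle
it has no zeros. Hence `1`, `ρ` and `conj ρ` are the only zeros of `f1`, and they are simple.
-/

section ThetaKernel

open MeasureTheory Set HurwitzZeta ProbabilityTheory

lemma one_le_evenKernel_zero {x : ℝ} (hx : 0 < x) : 1 ≤ evenKernel 0 x := by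
  simpa using sum_le_hasSum {0} (fun _ _ ↦ (Real.exp_pos _).le) (hasSum_int_evenKernel 0 hx)

lemma rpow_neg_half_le_evenKernel_zero {x : ℝ} (hx : 0 < x) :
    x ^ (-(1 / 2) : ℝ) ≤ evenKernel 0 x := by
  rw [evenKernel_functional_equation, ← evenKernel_eq_cosKernel_of_zero, Real.rpow_neg hx.le,
    one_div (x ^ _)]
  exact le_mul_of_one_le_right (by positivity) (one_le_evenKernel_zero (by positivity))

lemma exists_nonneg_f_modif_eq (x : ℝ) :
    ∃ r : ℝ, 0 ≤ r ∧ (hurwitzEvenFEPair 0).f_modif x = r := by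
  rcases le_or_gt x 0 with hx0 | hx0
  · exact ⟨0, le_rfl, by
      simp [WeakFEPair.f_modif, hx0.not_gt, (hx0.trans_lt one_pos).not_gt]⟩
  rcases lt_trichotomy x 1 with hx | rfl | hx
  · exact ⟨evenKernel 0 x - x ^ (-(1 / 2) : ℝ),
      sub_nonneg.2 (rpow_neg_half_le_evenKernel_zero hx0),
      by simp [WeakFEPair.f_modif, hx0, hx, hx.not_gt, hurwitzEvenFEPair]⟩
  · exact ⟨0, le_rfl, by simp [WeakFEPair.f_modif]⟩
  · exact ⟨evenKernel 0 x - 1, sub_nonneg.2 (one_le_evenKernel_zero hx0),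
      by simp [WeakFEPair.f_modif, hx, hx.not_gt, hurwitzEvenFEPair]⟩

/-- The density of `zetaMeasure`: the subtracted theta function whose Mellin transform is
`completedRiemannZeta₀`, with the factor `x ^ (-3 / 4)` that recentres it at `s = 1 / 2`. -/
noncomputable def zetaDensity (x : ℝ) : NNReal :=
  (x ^ (-(3 / 4) : ℝ) * ((hurwitzEvenFEPair 0).f_modif x).re / 2).toNNReal

/-- The positive measure on `(0, ∞)` for which `completedRiemannZeta₀ (1 / 2 + w)` is the
moment generating function of `log x / 2` at `w`. -/
noncomputable def zetaMeasure : Measure ℝ :=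
  (volume.restrict (Ioi 0)).withDensity fun x ↦ zetaDensity x

lemma aemeasurable_zetaDensity : AEMeasurable zetaDensity (volume.restrict (Ioi 0)) := by
  have hre := (hurwitzEvenFEPair 0).hf_modif_int.aestronglyMeasurable.aemeasurable.re
  have hpow : Measurable fun x : ℝ ↦ x ^ (-(3 / 4) : ℝ) := by fun_prop
  exact ((hpow.aemeasurable.mul hre).div_const 2).real_toNNReal

lemma zetaDensity_smul_cexp (w : ℂ) {x : ℝ} (hx : 0 < x) :
    zetaDensity x • cexp (w * (Real.log x / 2 : ℝ)) =
      (1 / 2) * (x : ℂ) ^ ((1 / 2 + w) / 2 - 1) • (hurwitzEvenFEPair 0).f_modif x := by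
  obtain ⟨r, hr, hfr⟩ := exists_nonneg_f_modif_eq x
  have hxc : (x : ℂ) ≠ 0 := by exact_mod_cast hx.ne'
  have hpow : (x : ℂ) ^ ((1 / 2 + w) / 2 - 1) =
      (x ^ (-(3 / 4) : ℝ) : ℝ) * cexp (w * (Real.log x / 2 : ℝ)) := by
    rw [ofReal_cpow hx.le, cpow_def_of_ne_zero hxc, cpow_def_of_ne_zero hxc, ← Complex.exp_add]
    push_cast [ofReal_log hx.le]
    ring_nf
  rw [hpow, NNReal.smul_def, zetaDensity, hfr, ofReal_re, Real.coe_toNNReal _ (by positivity)]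
  simp only [real_smul, smul_eq_mul]
  push_cast
  ring

lemma mellinConvergent_f_modif (s : ℂ) : MellinConvergent (hurwitzEvenFEPair 0).f_modif s := by
  obtain ⟨_, hgt⟩ := exists_gt s.re
  obtain ⟨_, hlt⟩ := exists_lt s.re
  have hP := (hurwitzEvenFEPair 0).isStrongFEPair_toStrongFEPair
  exact mellinConvergent_of_isBigO_rpow (hurwitzEvenFEPair 0).hf_modif_int
    (hP.hf_top _) hgt (hP.hf_zero _) hlt

lemma integrable_cexp_zetaMeasure (w : ℂ) :
    Integrable (fun x ↦ cexp (w * (Real.log x / 2 : ℝ))) zetaMeasure := by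
  rw [zetaMeasure, integrable_withDensity_iff_integrable_smul₀ aemeasurable_zetaDensity]
  refine ((mellinConvergent_f_modif ((1 / 2 + w) / 2)).const_mul (1 / 2)).congr ?_
  filter_upwards [ae_restrict_mem measurableSet_Ioi] with x hx
  exact (zetaDensity_smul_cexp w hx).symm

lemma integrable_exp_zetaMeasure (c : ℝ) :
    Integrable (fun x ↦ Real.exp (c * (Real.log x / 2))) zetaMeasure := by
  refine (integrable_cexp_zetaMeasure c).re.congr (.of_forall fun x ↦ ?_)
  simp only [RCLike.re_to_complex, ← ofReal_mul, exp_ofReal_re]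

lemma complexMGF_zetaMeasure (w : ℂ) :
    complexMGF (fun x ↦ Real.log x / 2) zetaMeasure w = completedRiemannZeta₀ (1 / 2 + w) := by
  have hmellin : completedRiemannZeta₀ (1 / 2 + w) =
      mellin (hurwitzEvenFEPair 0).f_modif ((1 / 2 + w) / 2) / 2 := rfl
  rw [complexMGF, zetaMeasure, integral_withDensity_eq_integral_smul₀ aemeasurable_zetaDensity,
    setIntegral_congr_fun measurableSet_Ioi fun x hx ↦ zetaDensity_smul_cexp w hx,
    integral_const_mul, hmellin, mellin]
  ring

lemma norm_completedRiemannZeta₀_le_norm_re (s : ℂ) :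
    ‖completedRiemannZeta₀ s‖ ≤ ‖completedRiemannZeta₀ s.re‖ := by
  have hmgf (z : ℂ) : completedRiemannZeta₀ z =
      complexMGF (fun x ↦ Real.log x / 2) zetaMeasure (z - 1 / 2) := by
    rw [complexMGF_zetaMeasure, add_sub_cancel]
  have hre : (s.re : ℂ) - 1 / 2 = ((s - 1 / 2).re : ℝ) := by simp
  rw [hmgf s, hmgf s.re, hre, complexMGF_ofReal, norm_real]
  exact norm_complexMGF_le_mgf.trans (le_abs_self _)

end ThetaKernel

section NonnegPowerSeries

/-- `f` is the sum of an everywhere convergent power series at `0` with nonnegative real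
coefficients. The disc maximum of such an `f` is attained on the positive axis, and its divided
differences are again of this kind, which bounds the remainder of Newton interpolation. -/
def HasNonnegPowerSeries (f : ℂ → ℂ) : Prop :=
  ∃ a : ℕ → ℝ, (∀ n, 0 ≤ a n) ∧ ∀ z : ℂ, HasSum (fun n ↦ (a n : ℂ) * z ^ n) (f z)

lemma hasSum_re_of_hasSum_ofReal_mul_pow {a : ℕ → ℝ} {R : ℝ} {y : ℂ}
    (h : HasSum (fun n ↦ (a n : ℂ) * (R : ℂ) ^ n) y) : HasSum (fun n ↦ a n * R ^ n) y.re := by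
  simpa only [← ofReal_pow, ← ofReal_mul, ofReal_re] using hasSum_re h

/-- The Taylor coefficients of the divided difference `(f z - f c) / (z - c)` of
`f z = ∑ a n * z ^ n`. -/
noncomputable def dividedDiffCoeff (a : ℕ → ℝ) (c : ℝ) (i : ℕ) : ℝ :=
  ∑' j, a (j + (i + 1)) * c ^ j

section

variable {a : ℕ → ℝ} {c : ℝ}

lemma dividedDiffCoeff_nonneg (ha : ∀ n, 0 ≤ a n) (hc : 0 ≤ c) (i : ℕ) :
    0 ≤ dividedDiffCoeff a c i :=
  tsum_nonneg fun _ ↦ mul_nonneg (ha _) (pow_nonneg hc _)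

lemma summable_shift_mul_pow (ha : ∀ n, 0 ≤ a n) (hc : 0 ≤ c)
    (hs : ∀ R : ℝ, Summable fun n ↦ a n * R ^ n) (i : ℕ) : Summable fun j ↦ a (j + i) * c ^ j := by
  have hshift := (summable_nat_add_iff i).2 (hs (c + 1))
  refine .of_nonneg_of_le (fun j ↦ mul_nonneg (ha _) (pow_nonneg hc _)) (fun j ↦ ?_) hshift
  refine mul_le_mul_of_nonneg_left ?_ (ha _)
  calc c ^ j ≤ (c + 1) ^ j := by gcongr; linarith
    _ ≤ (c + 1) ^ (j + i) := pow_le_pow_right₀ (by linarith) (by omega)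

lemma dividedDiffCoeff_eq_add (ha : ∀ n, 0 ≤ a n) (hc : 0 ≤ c)
    (hs : ∀ R : ℝ, Summable fun n ↦ a n * R ^ n) (i : ℕ) :
    dividedDiffCoeff a c i = a (i + 1) + c * dividedDiffCoeff a c (i + 1) := by
  rw [dividedDiffCoeff, (summable_shift_mul_pow ha hc hs _).tsum_eq_zero_add, dividedDiffCoeff,
    ← tsum_mul_left, zero_add, pow_zero, mul_one]
  congr 1
  refine tsum_congr fun j ↦ ?_
  rw [show j + 1 + (i + 1) = j + (i + 1 + 1) by ring, pow_succ]
  ring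

lemma tsum_eq_add_mul_dividedDiffCoeff_zero (hs : Summable fun n ↦ a n * c ^ n) :
    ∑' n, a n * c ^ n = a 0 + c * dividedDiffCoeff a c 0 := by
  rw [hs.tsum_eq_zero_add, dividedDiffCoeff, ← tsum_mul_left, pow_zero, mul_one]
  congr 1
  exact tsum_congr fun j ↦ by ring

lemma dividedDiffCoeff_mul_pow_le (ha : ∀ n, 0 ≤ a n) (hc : 0 ≤ c)
    (hs : ∀ R : ℝ, Summable fun n ↦ a n * R ^ n) {R : ℝ} (hR : c ≤ R) (i : ℕ) :
    dividedDiffCoeff a c i * R ^ (i + 1) ≤ ∑' n, a n * R ^ n := by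
  have hR0 : 0 ≤ R := hc.trans hR
  have hshift : Summable fun j ↦ a (j + (i + 1)) * R ^ (j + (i + 1)) :=
    (summable_nat_add_iff (f := fun n ↦ a n * R ^ n) (i + 1)).2 (hs R)
  calc dividedDiffCoeff a c i * R ^ (i + 1)
      = ∑' j, a (j + (i + 1)) * c ^ j * R ^ (i + 1) := tsum_mul_right.symm
    _ ≤ ∑' j, a (j + (i + 1)) * R ^ (j + (i + 1)) := by
        refine Summable.tsum_le_tsum (fun j ↦ ?_)
          ((summable_shift_mul_pow ha hc hs _).mul_right _) hshift
        rw [mul_assoc, pow_add R j]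
        have := ha (j + (i + 1))
        gcongr
    _ ≤ ∑' n, a n * R ^ n := by
        rw [← (hs R).sum_add_tsum_nat_add (i + 1)]
        exact le_add_of_nonneg_left
          (Finset.sum_nonneg fun n _ ↦ mul_nonneg (ha n) (pow_nonneg hR0 n))

lemma summable_dividedDiffCoeff_mul_pow (ha : ∀ n, 0 ≤ a n) (hc : 0 ≤ c)
    (hs : ∀ R : ℝ, Summable fun n ↦ a n * R ^ n) (z : ℂ) :
    Summable fun n ↦ (dividedDiffCoeff a c n : ℂ) * z ^ n := by
  set R : ℝ := ‖z‖ + c + 1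
  have hRpos : 0 < R := by positivity
  have hzR : ‖z‖ / R < 1 := by rw [div_lt_one hRpos]; linarith
  refine .of_norm_bounded (g := fun n ↦ (∑' n, a n * R ^ n) / R * (‖z‖ / R) ^ n)
    ((summable_geometric_of_lt_one (by positivity) hzR).mul_left _) fun n ↦ ?_
  have hcoeff : dividedDiffCoeff a c n ≤ (∑' n, a n * R ^ n) / R ^ (n + 1) := by
    rw [le_div_iff₀ (by positivity)]
    exact dividedDiffCoeff_mul_pow_le ha hc hs (by linarith [norm_nonneg z]) n
  rw [norm_mul, norm_pow, norm_real, Real.norm_of_nonneg (dividedDiffCoeff_nonneg ha hc n)]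
  calc dividedDiffCoeff a c n * ‖z‖ ^ n
      ≤ (∑' n, a n * R ^ n) / R ^ (n + 1) * ‖z‖ ^ n := by gcongr
    _ = (∑' n, a n * R ^ n) / R * (‖z‖ / R) ^ n := by rw [div_pow, pow_succ]; field_simp

end

namespace HasNonnegPowerSeries

variable {f : ℂ → ℂ}

lemma norm_le (hf : HasNonnegPowerSeries f) {z : ℂ} {R : ℝ} (h : ‖z‖ ≤ R) :
    ‖f z‖ ≤ ‖f R‖ := by
  obtain ⟨a, ha, hsum⟩ := hf
  refine le_trans ?_ (re_le_norm _)
  rw [← (hsum z).tsum_eq]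
  refine tsum_of_norm_bounded (hasSum_re_of_hasSum_ofReal_mul_pow (hsum R)) fun n ↦ ?_
  rw [norm_mul, norm_pow, norm_real, Real.norm_of_nonneg (ha n)]
  exact mul_le_mul_of_nonneg_left (pow_le_pow_left₀ (norm_nonneg _) h _) (ha n)

lemma apply_conj (hf : HasNonnegPowerSeries f) (z : ℂ) :
    f (starRingEnd ℂ z) = starRingEnd ℂ (f z) := by
  obtain ⟨a, -, hsum⟩ := hf
  refine (hsum _).unique ?_
  simpa [Function.comp_def] using (hsum z).map (starRingEnd ℂ) continuous_conj

lemma const_mul (hf : HasNonnegPowerSeries f) {c : ℝ} (hc : 0 ≤ c) :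
    HasNonnegPowerSeries fun z ↦ c * f z := by
  obtain ⟨a, ha, hsum⟩ := hf
  refine ⟨fun n ↦ c * a n, fun n ↦ mul_nonneg hc (ha n), fun z ↦ ?_⟩
  simpa only [ofReal_mul, mul_assoc] using (hsum z).mul_left (c : ℂ)

lemma exists_eq_add_sub_mul (hf : HasNonnegPowerSeries f) {c : ℝ} (hc : 0 ≤ c) :
    ∃ g : ℂ → ℂ, HasNonnegPowerSeries g ∧ ∀ z, f z = f c + (z - c) * g z := by
  obtain ⟨a, ha, hsum⟩ := hf
  have hs (R : ℝ) : Summable fun n ↦ a n * R ^ n :=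
    (hasSum_re_of_hasSum_ofReal_mul_pow (hsum R)).summable
  have hb := summable_dividedDiffCoeff_mul_pow ha hc hs
  refine ⟨fun z ↦ ∑' n, (dividedDiffCoeff a c n : ℂ) * z ^ n,
    ⟨_, dividedDiffCoeff_nonneg ha hc, fun z ↦ (hb z).hasSum⟩, fun z ↦ ?_⟩
  beta_reduce
  have hfz : f z = a 0 + ∑' n, (a (n + 1) : ℂ) * z ^ (n + 1) := by
    rw [← (hsum z).tsum_eq, (hsum z).summable.tsum_eq_zero_add, pow_zero, mul_one]
  have hfc : f c = a 0 + c * dividedDiffCoeff a c 0 := by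
    rw [← ofReal_mul, ← ofReal_add, ← tsum_eq_add_mul_dividedDiffCoeff_zero (hs c),
      ofReal_tsum, ← (hsum c).tsum_eq]
    simp only [ofReal_mul, ofReal_pow]
  have hgz : ∑' n, (dividedDiffCoeff a c n : ℂ) * z ^ n =
      dividedDiffCoeff a c 0 + ∑' n, (dividedDiffCoeff a c (n + 1) : ℂ) * z ^ (n + 1) := by
    rw [(hb z).tsum_eq_zero_add, pow_zero, mul_one]
  have hzg : z * ∑' n, (dividedDiffCoeff a c n : ℂ) * z ^ n =
      ∑' n, (a (n + 1) : ℂ) * z ^ (n + 1) +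
        c * ∑' n, (dividedDiffCoeff a c (n + 1) : ℂ) * z ^ (n + 1) := by
    rw [← tsum_mul_left, ← tsum_mul_left, ← Summable.tsum_add
      ((summable_nat_add_iff 1).2 (hsum z).summable)
      (((summable_nat_add_iff 1).2 (hb z)).mul_left _)]
    refine tsum_congr fun n ↦ ?_
    rw [dividedDiffCoeff_eq_add ha hc hs n]
    push_cast
    ring
  rw [sub_mul, hzg, hfz, hfc, hgz]
  ring

end HasNonnegPowerSeries

end NonnegPowerSeries

section EvenMoments

open MeasureTheory ProbabilityTheory
open scoped Nat

variable {Ω : Type*} [MeasurableSpace Ω] {μ : Measure Ω} {X : Ω → ℝ}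

lemma integrable_cosh_mul (hexp : ∀ c : ℝ, Integrable (fun ω ↦ Real.exp (c * X ω)) μ) (c : ℝ) :
    Integrable (fun ω ↦ Real.cosh (c * X ω)) μ := by
  refine (((hexp c).add (hexp (-c))).div_const 2).congr (.of_forall fun ω ↦ ?_)
  simp [Real.cosh_eq]

lemma integral_cosh_mul (hexp : ∀ w : ℂ, Integrable (fun ω ↦ cexp (w * X ω)) μ) (w : ℂ) :
    ∫ ω, Complex.cosh (w * X ω) ∂μ = (complexMGF X μ w + complexMGF X μ (-w)) / 2 := by
  rw [complexMGF, complexMGF, ← integral_add (hexp w) (hexp (-w)), ← integral_div]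
  simp only [Complex.cosh, neg_mul]

lemma hasSum_integral_cosh_mul (hX : AEMeasurable X μ)
    (hexp : ∀ c : ℝ, Integrable (fun ω ↦ Real.exp (c * X ω)) μ) (w : ℂ) :
    HasSum (fun n ↦ ((∫ ω, X ω ^ (2 * n) / (2 * n)! ∂μ : ℝ) : ℂ) * (w ^ 2) ^ n)
      (∫ ω, Complex.cosh (w * X ω) ∂μ) := by
  have hterm (n : ℕ) : ((∫ ω, X ω ^ (2 * n) / (2 * n)! ∂μ : ℝ) : ℂ) * (w ^ 2) ^ n =
      ∫ ω, (w * X ω) ^ (2 * n) / (2 * n)! ∂μ := by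
    rw [← integral_complex_ofReal, ← integral_mul_const]
    congr with ω
    push_cast
    rw [← pow_mul]
    ring
  simp only [hterm]
  refine hasSum_integral_of_dominated_convergence
    (fun n ω ↦ (‖w‖ * X ω) ^ (2 * n) / (2 * n)!) (fun n ↦ ?_) (fun n ↦ .of_forall fun ω ↦ ?_)
    (.of_forall fun ω ↦ (Real.hasSum_cosh _).summable) ?_
    (.of_forall fun ω ↦ Complex.hasSum_cosh _)
  · exact AEMeasurable.aestronglyMeasurable (by fun_prop)
  · rw [norm_div, norm_pow, norm_mul, norm_real, norm_natCast, mul_pow, mul_pow,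
      Real.norm_eq_abs, (even_two_mul n).pow_abs]
  · simpa only [(Real.hasSum_cosh _).tsum_eq] using integrable_cosh_mul hexp ‖w‖

lemma hasSum_even_moments_completedRiemannZeta₀ (w : ℂ) :
    HasSum (fun n ↦ ((∫ x, (Real.log x / 2) ^ (2 * n) / (2 * n)! ∂zetaMeasure : ℝ) : ℂ) *
      (w ^ 2) ^ n) (completedRiemannZeta₀ (1 / 2 + w)) := by
  have hsymm : completedRiemannZeta₀ (1 / 2 + -w) = completedRiemannZeta₀ (1 / 2 + w) := by
    rw [← completedRiemannZeta₀_one_sub]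
    ring_nf
  have hsum := hasSum_integral_cosh_mul (X := fun x ↦ Real.log x / 2)
    (by fun_prop) integrable_exp_zetaMeasure w
  rwa [integral_cosh_mul integrable_cexp_zetaMeasure, complexMGF_zetaMeasure,
    complexMGF_zetaMeasure, hsymm, add_self_div_two] at hsum

lemma exists_hasNonnegPowerSeries_completedRiemannZeta₀ :
    ∃ f, HasNonnegPowerSeries f ∧ ∀ w : ℂ, completedRiemannZeta₀ (1 / 2 + w) = f (w ^ 2) := by
  choose root hroot using fun z : ℂ ↦ IsAlgClosed.exists_pow_nat_eq z two_pos
  have hsum := hasSum_even_moments_completedRiemannZeta₀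
  refine ⟨fun z ↦ completedRiemannZeta₀ (1 / 2 + root z), ⟨fun n ↦
    ∫ x, (Real.log x / 2) ^ (2 * n) / (2 * n)! ∂zetaMeasure, fun n ↦ ?_, fun z ↦ ?_⟩, fun w ↦ ?_⟩
  · exact integral_nonneg fun x ↦ div_nonneg ((even_two_mul n).pow_nonneg _) (by positivity)
  · simpa only [hroot] using hsum (root z)
  · exact (hsum w).unique (by simpa only [hroot] using hsum (root (w ^ 2)))

end EvenMoments

lemma chi_one_sub (s : ℂ) : chi (1 - s) = chi s := by
  unfold chi; rw [completedRiemannZeta₀_one_sub]; ring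

lemma chi_conj (s : ℂ) : chi (starRingEnd ℂ s) = starRingEnd ℂ (chi s) := by
  obtain ⟨f, hf, zeta_eq⟩ := exists_hasNonnegPowerSeries_completedRiemannZeta₀
  have zeta_eq' (s : ℂ) : completedRiemannZeta₀ s = f ((s - 1 / 2) ^ 2) := by
    rw [← zeta_eq]; ring_nf
  have conj_sq : (starRingEnd ℂ s - 1 / 2) ^ 2 = starRingEnd ℂ ((s - 1 / 2) ^ 2) := by
    simp [map_ofNat]
  simp only [chi, zeta_eq', conj_sq, hf.apply_conj, map_add, map_mul, map_sub, map_one]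

lemma differentiable_chi : Differentiable ℂ chi := by
  unfold chi
  have := differentiable_completedZeta₀
  fun_prop

lemma chi_eq_mul_completedRiemannZeta {s : ℂ} (hs₀ : s ≠ 0) (hs₁ : s ≠ 1) :
    chi s = s * (s - 1) * completedRiemannZeta s := by
  have : s - 1 ≠ 0 := sub_ne_zero.2 hs₁
  have one_sub_ne : 1 - s ≠ 0 := sub_ne_zero.2 hs₁.symm
  rw [chi, completedRiemannZeta_eq]
  field_simp
  ring

lemma chi_eq_mul_riemannZeta {s : ℂ} (hs : 1 < s.re) :
    chi s = s * (s - 1) * (Gammaℝ s * riemannZeta s) := by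
  have hs₀ : s ≠ 0 := by rintro rfl; simp at hs; linarith
  have hs₁ : s ≠ 1 := by rintro rfl; simp at hs
  rw [chi_eq_mul_completedRiemannZeta hs₀ hs₁, riemannZeta_def_of_ne_zero hs₀,
    mul_div_cancel₀ _ (Gammaℝ_ne_zero_of_re_pos (by linarith))]

lemma chi_ne_zero_of_one_le_re {s : ℂ} (hs : 1 ≤ s.re) : chi s ≠ 0 := by
  rcases eq_or_ne s 1 with rfl | hs₁
  · simp [chi]
  have hs₀ : s ≠ 0 := by rintro rfl; simp at hs; linarith
  have zeta_ne := riemannZeta_ne_zero_of_one_le_re hs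
  rw [riemannZeta_def_of_ne_zero hs₀] at zeta_ne
  rw [chi_eq_mul_completedRiemannZeta hs₀ hs₁]
  exact mul_ne_zero (mul_ne_zero hs₀ (sub_ne_zero.2 hs₁)) (div_ne_zero_iff.1 zeta_ne).1

lemma norm_LSeries_le_tsum_norm_term {f : ℕ → ℂ} {x : ℝ} (hf : LSeriesSummable f x) {s : ℂ}
    (hs : x ≤ s.re) : ‖LSeries f s‖ ≤ ∑' n, ‖LSeries.term f x n‖ := by
  have term_le (n : ℕ) : ‖LSeries.term f s n‖ ≤ ‖LSeries.term f x n‖ :=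
    LSeries.norm_term_le_of_re_le_re f (by simpa using hs) n
  have summable_norm : Summable fun n ↦ ‖LSeries.term f s n‖ :=
    hf.norm.of_nonneg_of_le (fun _ ↦ norm_nonneg _) term_le
  exact (norm_tsum_le_tsum_norm summable_norm).trans (summable_norm.tsum_le_tsum term_le hf.norm)

lemma exists_norm_riemannZeta_le {x : ℝ} (hx : 1 < x) :
    ∃ C : ℝ, ∀ s : ℂ, x ≤ s.re → ‖riemannZeta s‖ ≤ C := by
  refine ⟨∑' n, ‖LSeries.term 1 x n‖, fun s hs ↦ ?_⟩
  rw [← LSeries_one_eq_riemannZeta (by linarith)]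
  exact norm_LSeries_le_tsum_norm_term (LSeriesSummable_one_iff.2 (by simpa using hx)) hs

lemma exists_le_norm_riemannZeta {x : ℝ} (hx : 1 < x) :
    ∃ c : ℝ, 0 < c ∧ ∀ s : ℂ, x ≤ s.re → c ≤ ‖riemannZeta s‖ := by
  set moebius : ℕ → ℂ := fun n ↦ ((ArithmeticFunction.moebius n : ℤ) : ℂ)
  have summable : LSeriesSummable moebius x :=
    ArithmeticFunction.LSeriesSummable_moebius_iff.2 (by simpa using hx)
  set C := ∑' n, ‖LSeries.term moebius x n‖
  have : 0 ≤ C := tsum_nonneg fun _ ↦ norm_nonneg _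
  refine ⟨(C + 1)⁻¹, by positivity, fun s hs ↦ ?_⟩
  have mul_eq := ArithmeticFunction.LSeries_zeta_mul_Lseries_moebius (s := s) (by linarith)
  rw [ArithmeticFunction.LSeries_zeta_eq_riemannZeta (by linarith)] at mul_eq
  have norm_mul_eq : ‖riemannZeta s‖ * ‖LSeries moebius s‖ = 1 := by
    rw [← norm_mul, mul_eq, norm_one]
  have moebius_le := norm_LSeries_le_tsum_norm_term summable hs
  rw [inv_le_iff_one_le_mul₀ (by positivity), ← norm_mul_eq]
  gcongr
  linarith

lemma norm_betaIntegral_le_inv {a : ℂ} (ha : 1 ≤ a.re) {b : ℝ} (hb : 0 < b) :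
    ‖betaIntegral a b‖ ≤ b⁻¹ := by
  have integral_eq : ∫ x in (0 : ℝ)..1, x ^ (b - 1) = b⁻¹ := by
    rw [integral_rpow (Or.inl (by linarith))]; simp [hb.ne']
  rw [← betaIntegral_symm, ← integral_eq]
  refine intervalIntegral.norm_integral_le_of_norm_le zero_le_one
    (Filter.Eventually.of_forall fun x hx ↦ ?_)
    (intervalIntegral.intervalIntegrable_rpow' (by linarith))
  have one_sub_cpow_le : ‖(1 - x : ℂ) ^ (a - 1)‖ ≤ 1 := by
    rcases hx.2.lt_or_eq with hx₁ | rfl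
    · rw [show (1 - x : ℂ) = ((1 - x : ℝ) : ℂ) by push_cast; ring,
        norm_cpow_eq_rpow_re_of_pos (by linarith)]
      exact Real.rpow_le_one (by linarith) (by linarith [hx.1]) (by simpa using ha)
    · rcases eq_or_ne (a - 1) 0 with ha₁ | ha₁ <;> simp [ha₁]
  rw [norm_mul, norm_cpow_eq_rpow_re_of_pos hx.1, sub_re, ofReal_re, one_re]
  exact mul_le_of_le_one_right (Real.rpow_nonneg hx.1.le _) one_sub_cpow_le

lemma norm_Gamma_mul_Gamma_add_one_le {a : ℂ} (ha : 1 ≤ a.re) {b : ℝ} (hb : 0 ≤ b) :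
    ‖Gamma a‖ * Real.Gamma (b + 1) ≤ ‖Gamma (a + b)‖ := by
  rcases hb.eq_or_lt with rfl | hb
  · simp
  have beta_eq := Gamma_mul_Gamma_eq_betaIntegral (s := a) (t := b) (by linarith)
    (by simpa using hb)
  have Gamma_b_pos : 0 < Real.Gamma b := Real.Gamma_pos_of_pos hb
  calc ‖Gamma a‖ * Real.Gamma (b + 1)
      = ‖Gamma a * Gamma b‖ * b := by
        rw [Real.Gamma_add_one hb.ne', norm_mul, Complex.Gamma_ofReal, Complex.norm_real,
          Real.norm_of_nonneg Gamma_b_pos.le]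
        ring
    _ = ‖Gamma (a + b)‖ * ‖betaIntegral a b‖ * b := by rw [beta_eq, norm_mul]
    _ ≤ ‖Gamma (a + b)‖ * b⁻¹ * b := by gcongr; exact norm_betaIntegral_le_inv ha hb
    _ = ‖Gamma (a + b)‖ := by field_simp

lemma norm_Gammaℝ (s : ℂ) : ‖Gammaℝ s‖ = Real.pi ^ (-s.re / 2) * ‖Gamma (s / 2)‖ := by
  rw [Gammaℝ_def, norm_mul, norm_cpow_eq_rpow_re_of_pos Real.pi_pos]
  simp

lemma exists_norm_Gammaℝ_le_mul_norm_Gammaℝ_add {b : ℝ} (hb : 0 ≤ b) :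
    ∃ C : ℝ, 0 < C ∧ ∀ s : ℂ, 2 ≤ s.re → ‖Gammaℝ s‖ ≤ C * ‖Gammaℝ (s + b)‖ := by
  have Gamma_pos : 0 < Real.Gamma (b / 2 + 1) := Real.Gamma_pos_of_pos (by positivity)
  refine ⟨Real.pi ^ (b / 2) / Real.Gamma (b / 2 + 1), by positivity, fun s hs ↦ ?_⟩
  have Gamma_le := norm_Gamma_mul_Gamma_add_one_le (a := s / 2) (by simp; linarith)
    (by positivity : 0 ≤ b / 2)
  rw [show s / 2 + ((b / 2 : ℝ) : ℂ) = (s + b) / 2 by push_cast; ring, ← le_div_iff₀ Gamma_pos]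
    at Gamma_le
  have pi_rpow : Real.pi ^ (-s.re / 2) =
      Real.pi ^ (b / 2) * Real.pi ^ (-(s + b : ℂ).re / 2) := by
    rw [← Real.rpow_add Real.pi_pos]; simp; ring_nf
  rw [norm_Gammaℝ, norm_Gammaℝ, pi_rpow]
  calc _ ≤ Real.pi ^ (b / 2) * Real.pi ^ (-(s + b : ℂ).re / 2) *
        (‖Gamma ((s + b) / 2)‖ / Real.Gamma (b / 2 + 1)) := by gcongr
    _ = _ := by ring

lemma norm_Gamma_one_half_add_mul_I_sq (t : ℝ) :
    ‖Gamma (1 / 2 + t * I)‖ ^ 2 = Real.pi / Real.cosh (Real.pi * t) := by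
  have reflection := Gamma_mul_Gamma_one_sub (1 / 2 + t * I)
  have one_sub_eq : 1 - (1 / 2 + t * I) = starRingEnd ℂ (1 / 2 + t * I) := by
    simp [map_ofNat]; ring
  have sin_eq : sin (Real.pi * (1 / 2 + t * I)) = Real.cosh (Real.pi * t) := by
    rw [show (Real.pi * (1 / 2 + t * I) : ℂ) = Real.pi * t * I + Real.pi / 2 by ring,
      sin_add_pi_div_two, cos_mul_I]
    push_cast; rfl
  rw [one_sub_eq, Gamma_conj, mul_conj, sin_eq, normSq_eq_norm_sq] at reflection
  exact_mod_cast reflection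

lemma exp_neg_le_norm_Gamma_one_half_add_mul_I (t : ℝ) :
    Real.exp (-(Real.pi * |t|)) ≤ ‖Gamma (1 / 2 + t * I)‖ := by
  refine le_of_sq_le_sq ?_ (norm_nonneg _)
  have cosh_le : Real.cosh (Real.pi * t) ≤ Real.exp (Real.pi * |t|) := by
    rw [← Real.cosh_abs, abs_mul, abs_of_pos Real.pi_pos, Real.cosh_eq]
    have : Real.exp (-(Real.pi * |t|)) ≤ Real.exp (Real.pi * |t|) := by
      gcongr; linarith [mul_nonneg Real.pi_pos.le (abs_nonneg t)]
    linarith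
  have one_le : 1 ≤ Real.exp (Real.pi * |t|) := Real.one_le_exp (by positivity)
  rw [norm_Gamma_one_half_add_mul_I_sq, le_div_iff₀ (Real.cosh_pos _), Real.exp_neg]
  calc (Real.exp (Real.pi * |t|))⁻¹ ^ 2 * Real.cosh (Real.pi * t)
      ≤ (Real.exp (Real.pi * |t|))⁻¹ ^ 2 * Real.exp (Real.pi * |t|) := by gcongr
    _ = (Real.exp (Real.pi * |t|))⁻¹ := by field_simp
    _ ≤ Real.pi := (inv_le_one_of_one_le₀ one_le).trans (by linarith [Real.pi_gt_three])

lemma exists_pos_le_Gamma_add_one (b : ℝ) :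
    ∃ c : ℝ, 0 < c ∧ ∀ x, 0 ≤ x → x ≤ b → c ≤ Real.Gamma (x + 1) := by
  have Gamma_pos (x : ℝ) (hx : 0 ≤ x) : 0 < Real.Gamma (x + 1) :=
    Real.Gamma_pos_of_pos (by linarith)
  have continuousOn_inv : ContinuousOn (fun x ↦ (Real.Gamma (x + 1))⁻¹) (Set.Icc 0 b) := by
    refine ContinuousOn.inv₀ (fun x hx ↦ ?_) fun x hx ↦ (Gamma_pos x hx.1).ne'
    have add_one_ne (m : ℕ) : x + 1 ≠ -m := by
      have := m.cast_nonneg (α := ℝ)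
      linarith [hx.1]
    have continuousAt_Gamma := (Real.differentiableAt_Gamma add_one_ne).continuousAt
    exact (continuousAt_Gamma.comp (f := (· + 1)) (by fun_prop)).continuousWithinAt
  obtain ⟨C, hC⟩ := isCompact_Icc.exists_bound_of_continuousOn continuousOn_inv
  refine ⟨(|C| + 1)⁻¹, by positivity, fun x hx₀ hxb ↦ ?_⟩
  have inv_le := (le_abs_self _).trans (hC x ⟨hx₀, hxb⟩)
  exact inv_le_of_inv_le₀ (Gamma_pos x hx₀) (by linarith [le_abs_self C])

lemma exists_exp_neg_le_norm_Gamma (b : ℝ) :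
    ∃ c : ℝ, 0 < c ∧ ∀ z : ℂ, 1 / 2 ≤ z.re → z.re ≤ b →
      c * Real.exp (-(5 * ‖z‖)) ≤ ‖Gamma z‖ := by
  obtain ⟨c, hc, Gamma_ge⟩ := exists_pos_le_Gamma_add_one b
  refine ⟨c / 2, by positivity, fun z hz hzb ↦ ?_⟩
  set a : ℂ := 1 / 2 + z.im * I with ha
  have a_re : a.re = 1 / 2 := by simp [ha]
  have a_ne : a ≠ 0 := fun h ↦ by norm_num [h] at a_re
  have z_ne : z ≠ 0 := fun h ↦ by norm_num [h] at hz
  have z_eq : z + 1 = a + 1 + (z.re - 1 / 2 : ℝ) := by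
    apply Complex.ext <;> simp [ha]
    ring
  have shift_le := norm_Gamma_mul_Gamma_add_one_le (a := a + 1) (b := z.re - 1 / 2)
    (by simp [a_re]) (by linarith)
  rw [← z_eq, Gamma_add_one _ a_ne, Gamma_add_one _ z_ne, norm_mul, norm_mul] at shift_le
  have a_norm_ge : 1 / 2 ≤ ‖a‖ := by simpa [a_re] using abs_re_le_norm a
  have Gamma_shift_ge := Gamma_ge (z.re - 1 / 2) (by linarith) (by linarith)
  have Gamma_a_ge := exp_neg_le_norm_Gamma_one_half_add_mul_I z.im
  have norm_le_exp : ‖z‖ ≤ Real.exp ‖z‖ := by linarith [Real.add_one_le_exp ‖z‖]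
  have exponent_le : Real.exp (-(4 * ‖z‖)) ≤ Real.exp (-(Real.pi * |z.im|)) := by
    have := abs_im_le_norm z
    have := Real.pi_lt_four
    gcongr
  refine le_of_mul_le_mul_left ?_ (Real.exp_pos ‖z‖)
  calc Real.exp ‖z‖ * (c / 2 * Real.exp (-(5 * ‖z‖)))
      = 1 / 2 * Real.exp (-(4 * ‖z‖)) * c := by
        rw [show -(4 * ‖z‖) = ‖z‖ + -(5 * ‖z‖) by ring, Real.exp_add]; ring
    _ ≤ ‖a‖ * ‖Gamma a‖ * Real.Gamma (z.re - 1 / 2 + 1) := by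
        gcongr; exact exponent_le.trans Gamma_a_ge
    _ ≤ ‖z‖ * ‖Gamma z‖ := shift_le
    _ ≤ Real.exp ‖z‖ * ‖Gamma z‖ := by gcongr

lemma exists_norm_chi_le_exp (a b : ℝ) :
    ∃ C : ℝ, 0 < C ∧ ∀ s : ℂ, a ≤ s.re → s.re ≤ b → ‖chi s‖ ≤ C * Real.exp (2 * ‖s‖) := by
  have continuousOn : ContinuousOn (fun x : ℝ ↦ completedRiemannZeta₀ x) (Set.Icc a b) :=
    (differentiable_completedZeta₀.continuous.comp continuous_ofReal).continuousOn
  obtain ⟨M, hM⟩ := isCompact_Icc.exists_bound_of_continuousOn continuousOn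
  refine ⟨1 + |M|, by positivity, fun s has hsb ↦ ?_⟩
  have zeta_le : ‖completedRiemannZeta₀ s‖ ≤ |M| :=
    (norm_completedRiemannZeta₀_le_norm_re s).trans ((hM _ ⟨has, hsb⟩).trans (le_abs_self M))
  have exp_sq : Real.exp (2 * ‖s‖) = Real.exp ‖s‖ * Real.exp ‖s‖ := by
    rw [← Real.exp_add]; ring_nf
  have add_one_le : ‖s‖ + 1 ≤ Real.exp ‖s‖ := Real.add_one_le_exp _
  have sub_one_le : ‖s - 1‖ ≤ Real.exp ‖s‖ := (norm_sub_le s 1).trans (by simpa using add_one_le)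
  have one_le : 1 ≤ Real.exp ‖s‖ * Real.exp ‖s‖ :=
    one_le_mul_of_one_le_of_one_le (Real.one_le_exp (norm_nonneg s))
      (Real.one_le_exp (norm_nonneg s))
  rw [exp_sq]
  calc ‖chi s‖ ≤ ‖s‖ * ‖s - 1‖ * ‖completedRiemannZeta₀ s‖ + 1 := by
        simpa [chi] using norm_add_le (s * (s - 1) * completedRiemannZeta₀ s) 1
    _ ≤ Real.exp ‖s‖ * Real.exp ‖s‖ * |M| + Real.exp ‖s‖ * Real.exp ‖s‖ := by
        gcongr; linarith
    _ = _ := by ring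

lemma exists_exp_neg_le_norm_chi {a b : ℝ} (ha : 1 < a) :
    ∃ c : ℝ, 0 < c ∧ ∀ s : ℂ, a ≤ s.re → s.re ≤ b → c * Real.exp (-(3 * ‖s‖)) ≤ ‖chi s‖ := by
  obtain ⟨c₁, hc₁, zeta_ge⟩ := exists_le_norm_riemannZeta ha
  obtain ⟨c₂, hc₂, Gamma_ge⟩ := exists_exp_neg_le_norm_Gamma b
  have : 0 < a - 1 := by linarith
  have := Real.pi_pos
  refine ⟨(a - 1) * Real.pi ^ (-b / 2) * c₂ * c₁, by positivity, fun s has hsb ↦ ?_⟩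
  have re_half : (s / 2).re = s.re / 2 := by simp
  have norm_half : ‖s / 2‖ = ‖s‖ / 2 := by simp
  have norm_ge : 1 ≤ ‖s‖ := by linarith [re_le_norm s]
  have norm_sub_ge : a - 1 ≤ ‖s - 1‖ := by
    have := re_le_norm (s - 1)
    simp only [sub_re, one_re] at this
    linarith
  have Gamma_ge' : c₂ * Real.exp (-(3 * ‖s‖)) ≤ ‖Gamma (s / 2)‖ := by
    refine le_trans ?_ (Gamma_ge (s / 2) (by linarith) (by linarith))
    rw [norm_half]
    exact mul_le_mul_of_nonneg_left (Real.exp_le_exp.2 (by linarith [norm_nonneg s])) hc₂.le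
  have pi_rpow_ge : Real.pi ^ (-b / 2) ≤ Real.pi ^ (-s.re / 2) := by
    gcongr; linarith [Real.pi_gt_three]
  rw [chi_eq_mul_riemannZeta (by linarith), norm_mul, norm_mul, norm_mul, norm_Gammaℝ]
  calc _ = 1 * (a - 1) * (Real.pi ^ (-b / 2) * (c₂ * Real.exp (-(3 * ‖s‖))) * c₁) := by ring
    _ ≤ _ := by gcongr; exact zeta_ge s has

lemma exists_norm_chi_le_mul_norm_chi_add {b : ℝ} (hb : 0 ≤ b) :
    ∃ C : ℝ, 0 < C ∧ ∀ s : ℂ, 2 ≤ s.re → ‖chi s‖ ≤ C * ‖chi (s + b)‖ := by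
  obtain ⟨Z, zeta_le⟩ := exists_norm_riemannZeta_le one_lt_two
  obtain ⟨c, hc, zeta_ge⟩ := exists_le_norm_riemannZeta one_lt_two
  obtain ⟨K, hK, Gamma_le⟩ := exists_norm_Gammaℝ_le_mul_norm_Gammaℝ_add hb
  refine ⟨K * ((|Z| + 1) / c), by positivity, fun s hs ↦ ?_⟩
  have norm_le_norm_add (z : ℂ) (hz : 0 ≤ z.re) : ‖z‖ ≤ ‖z + b‖ := by
    rw [norm_def, norm_def]
    refine Real.sqrt_le_sqrt ?_
    simp only [normSq_apply, add_re, add_im, ofReal_re, ofReal_im, add_zero]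
    nlinarith
  have zeta_ratio : ‖riemannZeta s‖ ≤ (|Z| + 1) / c * ‖riemannZeta (s + b)‖ := by
    have := zeta_ge (s + b) (by simp; linarith)
    rw [div_mul_eq_mul_div, le_div_iff₀ hc]
    gcongr
    linarith [zeta_le s hs, le_abs_self Z]
  have sub_one_le : ‖s - 1‖ ≤ ‖s + b - 1‖ := by
    rw [add_sub_right_comm]
    exact norm_le_norm_add (s - 1) (by simp; linarith)
  rw [chi_eq_mul_riemannZeta (by linarith), chi_eq_mul_riemannZeta (by simp; linarith)]
  simp only [norm_mul]
  calc _ ≤ ‖s + b‖ * ‖s + b - 1‖ *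
        (K * ‖Gammaℝ (s + b)‖ * ((|Z| + 1) / c * ‖riemannZeta (s + b)‖)) := by
        gcongr
        · exact norm_le_norm_add s (by linarith)
        · exact Gamma_le s hs
    _ = _ := by ring

lemma chi_add_one_add_ne_zero {ε : ℝ} (hε : 0 ≤ ε) {s : ℂ} (hs : 0 ≤ s.re) :
    chi (s + 1 + ε) ≠ 0 :=
  chi_ne_zero_of_one_le_re (by simp; linarith)

lemma exists_norm_chi_sub_le_of_three_le_re {ε : ℝ} (hε₀ : 0 < ε) (hε₁ : ε ≤ 1) :
    ∃ C : ℝ, 0 < C ∧ ∀ s : ℂ, 3 ≤ s.re → ‖chi (s - ε)‖ ≤ C * ‖chi (s + 1 + ε)‖ := by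
  obtain ⟨C, hC, chi_le⟩ := exists_norm_chi_le_mul_norm_chi_add (b := 1 + 2 * ε) (by positivity)
  refine ⟨C, hC, fun s hs ↦ ?_⟩
  convert chi_le (s - ε) (by simp; linarith) using 4
  push_cast
  ring

lemma exists_norm_chi_sub_le_exp {ε : ℝ} (hε₀ : 0 < ε) (hε₁ : ε ≤ 1) :
    ∃ C : ℝ, ∀ s : ℂ, 0 ≤ s.re →
      ‖chi (s - ε)‖ ≤ C * Real.exp (5 * ‖s‖) * ‖chi (s + 1 + ε)‖ := by
  obtain ⟨C₀, hC₀, right_le⟩ := exists_norm_chi_sub_le_of_three_le_re hε₀ hε₁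
  obtain ⟨C₁, hC₁, upper⟩ := exists_norm_chi_le_exp (-1) 3
  obtain ⟨c, hc, lower⟩ := exists_exp_neg_le_norm_chi (a := 1 + ε) (b := 5) (by linarith)
  refine ⟨C₀ + C₁ * Real.exp 8 / c, fun s hs ↦ ?_⟩
  have one_le_exp : 1 ≤ Real.exp (5 * ‖s‖) := Real.one_le_exp (by positivity)
  rcases le_or_gt 3 s.re with h3 | h3
  · refine (right_le s h3).trans ?_
    gcongr
    exact (le_mul_of_one_le_right hC₀.le one_le_exp).trans
      (by gcongr; exact le_add_of_nonneg_right (by positivity))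
  have norm_ε : ‖(ε : ℂ)‖ = ε := by simp [hε₀.le]
  have norm_sub_le : ‖s - ε‖ ≤ ‖s‖ + 1 := (norm_sub_le _ _).trans (by linarith)
  have norm_add_le : ‖s + 1 + ε‖ ≤ ‖s‖ + 2 :=
    norm_add₃_le.trans (by simp only [norm_one]; linarith)
  have lower_le := lower (s + 1 + ε) (by simp; linarith) (by simp; linarith)
  calc ‖chi (s - ε)‖ ≤ C₁ * Real.exp (2 * ‖s - ε‖) :=
        upper (s - ε) (by simp; linarith) (by simp; linarith)
    _ ≤ C₁ * Real.exp (8 + 5 * ‖s‖ - 3 * ‖s + 1 + ε‖) := by gcongr; linarith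
    _ = C₁ * Real.exp 8 / c * Real.exp (5 * ‖s‖) * (c * Real.exp (-(3 * ‖s + 1 + ε‖))) := by
        rw [sub_eq_add_neg, Real.exp_add, Real.exp_add]
        field_simp
    _ ≤ (C₀ + C₁ * Real.exp 8 / c) * Real.exp (5 * ‖s‖) * ‖chi (s + 1 + ε)‖ := by
        gcongr
        linarith

lemma norm_chi_sub_eq_norm_chi_add (ε t : ℝ) :
    ‖chi (t * I - ε)‖ = ‖chi (t * I + 1 + ε)‖ := by
  have reflect : 1 - (t * I - ε) = (starRingEnd ℂ) (t * I + 1 + ε) := by simp; ring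
  rw [← chi_one_sub, reflect, chi_conj, norm_conj]

/- The shift by `ε` keeps the zeros of the denominator away from the half-plane, and the functional
equation makes the quotient unimodular on the imaginary axis. -/
lemma norm_chi_sub_le_norm_chi_add {ε : ℝ} (hε₀ : 0 < ε) (hε₁ : ε ≤ 1) {s : ℂ} (hs : 0 ≤ s.re) :
    ‖chi (s - ε)‖ ≤ ‖chi (s + 1 + ε)‖ := by
  obtain ⟨C₀, -, right_le⟩ := exists_norm_chi_sub_le_of_three_le_re hε₀ hε₁
  obtain ⟨C, growth⟩ := exists_norm_chi_sub_le_exp hε₀ hε₁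
  have norm_pos (z : ℂ) (hz : 0 ≤ z.re) : 0 < ‖chi (z + 1 + ε)‖ :=
    norm_pos_iff.2 (chi_add_one_add_ne_zero hε₀.le hz)
  suffices ‖chi (s - ε) / chi (s + 1 + ε)‖ ≤ 1 by
    rwa [norm_div, div_le_one (norm_pos s hs)] at this
  refine PhragmenLindelof.right_half_plane_of_bounded_on_real
    (f := fun z ↦ chi (z - ε) / chi (z + 1 + ε)) ?_ ?_ ?_ ?_ hs
  · refine DifferentiableOn.diffContOnCl fun z hz ↦ ?_
    rw [closure_setOfPred_lt_re] at hz
    have := differentiable_chi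
    exact (DifferentiableAt.fun_div (c := fun z ↦ chi (z - ε)) (d := fun z ↦ chi (z + 1 + ε))
      (by fun_prop) (by fun_prop)
      (norm_pos_iff.1 (norm_pos z hz))).differentiableWithinAt
  · refine ⟨1, by norm_num, 5, Asymptotics.IsBigO.of_bound C ?_⟩
    rw [Filter.eventually_inf_principal]
    refine Filter.Eventually.of_forall fun z hz ↦ ?_
    have hz₀ : 0 ≤ z.re := le_of_lt hz
    rw [norm_div, div_le_iff₀ (norm_pos z hz₀), Real.rpow_one, Real.norm_of_nonneg (by positivity)]
    exact growth z hz₀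
  · refine ⟨C₀, ?_⟩
    rw [Filter.eventually_map]
    filter_upwards [Filter.eventually_ge_atTop (3 : ℝ)] with x hx
    rw [norm_div, div_le_iff₀ (norm_pos x (by simp; linarith))]
    exact right_le x (by simpa using hx)
  · intro t
    rw [norm_div, norm_chi_sub_eq_norm_chi_add, div_self (norm_pos _ (by simp)).ne']

lemma norm_chi_le_norm_chi_add_one {s : ℂ} (hs : 0 ≤ s.re) : ‖chi s‖ ≤ ‖chi (s + 1)‖ := by
  have := differentiable_chi.continuous
  have left_tendsto : Filter.Tendsto (fun ε : ℝ ↦ ‖chi (s - ε)‖) (nhdsWithin 0 (Set.Ioi 0))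
      (nhds ‖chi s‖) :=
    (Continuous.tendsto' (by fun_prop) _ _ (by simp)).mono_left nhdsWithin_le_nhds
  have right_tendsto : Filter.Tendsto (fun ε : ℝ ↦ ‖chi (s + 1 + ε)‖) (nhdsWithin 0 (Set.Ioi 0))
      (nhds ‖chi (s + 1)‖) :=
    (Continuous.tendsto' (by fun_prop) _ _ (by simp)).mono_left nhdsWithin_le_nhds
  refine le_of_tendsto_of_tendsto left_tendsto right_tendsto ?_
  filter_upwards [Ioc_mem_nhdsGT one_pos] with ε hε
  exact norm_chi_sub_le_norm_chi_add hε.1 hε.2 hs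

/-- The quotient `χ(s) / χ(s + 1)`, which maps the right half-plane to the unit disc. -/
noncomputable def chiRatio (s : ℂ) : ℂ := chi s / chi (s + 1)

lemma chi_add_one_ne_zero {s : ℂ} (hs : 0 ≤ s.re) : chi (s + 1) ≠ 0 :=
  chi_ne_zero_of_one_le_re (by simpa using hs)

lemma norm_chiRatio_le_one {s : ℂ} (hs : 0 ≤ s.re) : ‖chiRatio s‖ ≤ 1 := by
  rw [chiRatio, norm_div, div_le_one (norm_pos_iff.2 (chi_add_one_ne_zero hs))]
  exact norm_chi_le_norm_chi_add_one hs

lemma differentiableAt_chiRatio {s : ℂ} (hs : 0 ≤ s.re) : DifferentiableAt ℂ chiRatio s := by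
  have := differentiable_chi
  exact DifferentiableAt.fun_div (c := chi) (d := fun s ↦ chi (s + 1)) (by fun_prop) (by fun_prop)
    (chi_add_one_ne_zero hs)

lemma chiRatio_conj (s : ℂ) : chiRatio ((starRingEnd ℂ) s) = (starRingEnd ℂ) (chiRatio s) := by
  have add_one : (starRingEnd ℂ) s + 1 = (starRingEnd ℂ) (s + 1) := by simp
  rw [chiRatio, chiRatio, add_one, chi_conj, chi_conj, map_div₀]

lemma one_sub_conj_mul_ne_zero {b z : ℂ} (hb : ‖b‖ < 1) (hz : ‖z‖ ≤ 1) :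
    1 - (starRingEnd ℂ) b * z ≠ 0 := by
  intro h
  have norm_eq := congrArg norm (sub_eq_zero.1 h)
  rw [norm_mul, norm_conj, norm_one] at norm_eq
  nlinarith [norm_nonneg b, norm_nonneg z]

lemma norm_sub_le_norm_one_sub_conj_mul {b z : ℂ} (hb : ‖b‖ ≤ 1) (hz : ‖z‖ ≤ 1) :
    ‖z - b‖ ≤ ‖1 - (starRingEnd ℂ) b * z‖ := by
  have normSq_sub : normSq (1 - (starRingEnd ℂ) b * z) - normSq (z - b) =
      (1 - normSq b) * (1 - normSq z) := by
    simp [normSq_apply]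
    ring
  have normSq_le_one (w : ℂ) (hw : ‖w‖ ≤ 1) : 0 ≤ 1 - normSq w := by
    rw [normSq_eq_norm_sq]
    nlinarith [norm_nonneg w]
  rw [norm_def, norm_def]
  refine Real.sqrt_le_sqrt ?_
  linarith [mul_nonneg (normSq_le_one b hb) (normSq_le_one z hz)]

lemma norm_sub_lt_norm_add_conj {s c : ℂ} (hs : 0 < s.re) (hc : 0 < c.re) :
    ‖s - c‖ < ‖s + (starRingEnd ℂ) c‖ := by
  rw [norm_def, norm_def]
  refine Real.sqrt_lt_sqrt (normSq_nonneg _) ?_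
  simp only [normSq_apply, sub_re, sub_im, add_re, add_im, conj_re, conj_im]
  nlinarith [mul_pos hs hc]

lemma one_sub_ne_zero_of_norm_lt_one {w : ℂ} (hw : ‖w‖ < 1) : 1 - w ≠ 0 := by
  simpa using one_sub_conj_mul_ne_zero (b := (starRingEnd ℂ) w) (z := 1) (by simpa) (by simp)

/-- The Cayley transform taking the unit disc to the right half-plane and `0` to `c`. -/
noncomputable def discToHalfPlane (c w : ℂ) : ℂ := (c + (starRingEnd ℂ) c * w) / (1 - w)

lemma discToHalfPlane_re_pos {c w : ℂ} (hc : 0 < c.re) (hw : ‖w‖ < 1) :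
    0 < (discToHalfPlane c w).re := by
  have normSq_pos : 0 < normSq (1 - w) := normSq_pos.2 (one_sub_ne_zero_of_norm_lt_one hw)
  have normSq_lt : normSq w < 1 := by
    rw [normSq_eq_norm_sq]
    nlinarith [norm_nonneg w]
  have re_eq : (discToHalfPlane c w).re = c.re * (1 - normSq w) / normSq (1 - w) := by
    simp [discToHalfPlane, div_re, normSq_apply]
    ring
  rw [re_eq]
  exact div_pos (mul_pos hc (sub_pos.2 normSq_lt)) normSq_pos

lemma discToHalfPlane_div {s c : ℂ} (hs : 0 < s.re) (hc : 0 < c.re) :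
    discToHalfPlane c ((s - c) / (s + (starRingEnd ℂ) c)) = s := by
  have norm_lt := norm_sub_lt_norm_add_conj hs hc
  have add_ne : s + (starRingEnd ℂ) c ≠ 0 := norm_pos_iff.1 ((norm_nonneg _).trans_lt norm_lt)
  have quot_lt : ‖(s - c) / (s + (starRingEnd ℂ) c)‖ < 1 := by
    rwa [norm_div, div_lt_one (norm_pos_iff.2 add_ne)]
  rw [discToHalfPlane, div_eq_iff (one_sub_ne_zero_of_norm_lt_one quot_lt)]
  field_simp
  ring

lemma schwarzPick_halfPlane_of_norm_lt_one {f : ℂ → ℂ}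
    (hf : ∀ z : ℂ, 0 < z.re → DifferentiableAt ℂ f z) (hlt : ∀ z : ℂ, 0 < z.re → ‖f z‖ < 1)
    {s c : ℂ} (hs : 0 < s.re) (hc : 0 < c.re) :
    ‖f s - f c‖ * ‖s + (starRingEnd ℂ) c‖ ≤ ‖s - c‖ * ‖1 - (starRingEnd ℂ) (f c) * f s‖ := by
  let g (w : ℂ) : ℂ := (f (discToHalfPlane c w) - f c) /
    (1 - (starRingEnd ℂ) (f c) * f (discToHalfPlane c w))
  have ne_zero (z : ℂ) (hz : 0 < z.re) : 1 - (starRingEnd ℂ) (f c) * f z ≠ 0 :=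
    one_sub_conj_mul_ne_zero (hlt c hc) (hlt z hz).le
  have norm_lt := norm_sub_lt_norm_add_conj hs hc
  have norm_pos : 0 < ‖s + (starRingEnd ℂ) c‖ := (norm_nonneg _).trans_lt norm_lt
  have differentiableOn_g : DifferentiableOn ℂ g (Metric.ball 0 1) := fun w hw ↦ by
    have hw₁ := mem_ball_zero_iff.1 hw
    have hre := discToHalfPlane_re_pos hc hw₁
    have : DifferentiableAt ℂ (discToHalfPlane c) w :=
      DifferentiableAt.fun_div (by fun_prop) (by fun_prop) (one_sub_ne_zero_of_norm_lt_one hw₁)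
    have comp : DifferentiableAt ℂ (fun w ↦ f (discToHalfPlane c w)) w :=
      (hf _ hre).fun_comp' w this
    exact ((comp.sub_const _).fun_div ((comp.const_mul _).const_sub _)
      (ne_zero _ hre)).differentiableWithinAt
  have mapsTo_g : Set.MapsTo g (Metric.ball 0 1) (Metric.closedBall 0 1) := fun w hw ↦ by
    have hre := discToHalfPlane_re_pos hc (mem_ball_zero_iff.1 hw)
    rw [mem_closedBall_zero_iff, norm_div]
    exact div_le_one_of_le₀
      (norm_sub_le_norm_one_sub_conj_mul (hlt c hc).le (hlt _ hre).le) (norm_nonneg _)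
  have g_zero : g 0 = 0 := by simp [g, discToHalfPlane]
  have schwarz := norm_le_norm_of_mapsTo_ball (z := (s - c) / (s + (starRingEnd ℂ) c))
    differentiableOn_g mapsTo_g g_zero (by rwa [norm_div, div_lt_one norm_pos])
  simp only [g, discToHalfPlane_div hs hc, norm_div] at schwarz
  rwa [div_le_div_iff₀ (norm_pos_iff.2 (ne_zero s hs)) norm_pos] at schwarz

theorem schwarzPick_halfPlane {f : ℂ → ℂ} (hf : ∀ z : ℂ, 0 < z.re → DifferentiableAt ℂ f z)
    (hle : ∀ z : ℂ, 0 < z.re → ‖f z‖ ≤ 1) {s c : ℂ} (hs : 0 < s.re) (hc : 0 < c.re) :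
    ‖f s - f c‖ * ‖s + (starRingEnd ℂ) c‖ ≤ ‖s - c‖ * ‖1 - (starRingEnd ℂ) (f c) * f s‖ := by
  have left_tendsto : Filter.Tendsto
      (fun l : ℝ ↦ ‖l * f s - l * f c‖ * ‖s + (starRingEnd ℂ) c‖) (nhdsWithin 1 (Set.Iio 1))
      (nhds (‖f s - f c‖ * ‖s + (starRingEnd ℂ) c‖)) :=
    (Continuous.tendsto' (by fun_prop) _ _ (by simp)).mono_left nhdsWithin_le_nhds
  have right_tendsto : Filter.Tendsto
      (fun l : ℝ ↦ ‖s - c‖ * ‖1 - (starRingEnd ℂ) (l * f c) * (l * f s)‖)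
      (nhdsWithin 1 (Set.Iio 1)) (nhds (‖s - c‖ * ‖1 - (starRingEnd ℂ) (f c) * f s‖)) := by
    simp only [map_mul, conj_ofReal]
    exact (Continuous.tendsto' (by fun_prop) _ _ (by simp)).mono_left nhdsWithin_le_nhds
  refine le_of_tendsto_of_tendsto left_tendsto right_tendsto ?_
  filter_upwards [Ico_mem_nhdsLT one_pos] with l hl
  refine schwarzPick_halfPlane_of_norm_lt_one (f := fun z ↦ l * f z)
    (fun z hz ↦ (hf z hz).const_mul _) (fun z hz ↦ ?_) hs hc
  rw [norm_mul, norm_real, Real.norm_of_nonneg hl.1]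
  nlinarith [hle z hz, hl.1, hl.2]

/-- A disc in `ℂ` with centre `(re + im * I) / 2 ^ 60` and radius `rad / 2 ^ 60`. The operations on
these discs are integer arithmetic which the kernel can evaluate; each result contains the exact
values of the corresponding operation on `ℂ`. -/
structure DyadicBall where
  re : ℤ
  im : ℤ
  rad : ℤ

/-- The number `(m + n / m) / 2 + 1`: a Newton step from `m` for the square root of `n`, rounded so
that it is never smaller than `√n`. -/
def heronStep (n m : ℕ) : ℕ := (m + n / m) / 2 + 1

lemma le_heronStep {m n : ℕ} (hm : 0 < m) {x : ℝ} (hx : x ^ 2 ≤ n) : x ≤ heronStep n m := by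
  have hm' : (0 : ℝ) < m := by exact_mod_cast hm
  have newton_step : 2 * x ≤ m + n / m := by
    have sq_div_le : x ^ 2 / m ≤ n / m := by gcongr
    have sq_eq : (m : ℝ) + x ^ 2 / m - 2 * x = (m - x) ^ 2 / m := by field_simp; ring
    have : 0 ≤ (m - x) ^ 2 / m := by positivity
    linarith
  have floor_div : (n : ℝ) / m < (n / m : ℕ) + 1 := by
    rw [div_lt_iff₀ hm']
    exact_mod_cast Nat.lt_mul_of_div_lt (Nat.lt_succ_self (n / m)) hm
  have floor_half : ((m + n / m : ℕ) : ℝ) ≤ 2 * ((m + n / m) / 2 : ℕ) + 1 := by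
    exact_mod_cast (by lia : m + n / m ≤ 2 * ((m + n / m) / 2) + 1)
  rw [heronStep]
  push_cast at floor_half ⊢
  linarith

lemma heronStep_pos (n m : ℕ) : 0 < heronStep n m := Nat.succ_pos _

lemma cast_div_le_ediv_add_one (a : ℤ) {n : ℤ} (hn : 0 < n) :
    (a : ℝ) / n ≤ ((a / n : ℤ) : ℝ) + 1 := by
  rw [div_le_iff₀ (by exact_mod_cast hn)]
  exact_mod_cast (Int.lt_ediv_add_one_mul_self a hn).le

lemma ediv_le_cast_div (a : ℤ) {n : ℤ} (hn : 0 < n) : ((a / n : ℤ) : ℝ) ≤ (a : ℝ) / n := by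
  rw [le_div_iff₀ (by exact_mod_cast hn)]
  exact_mod_cast Int.ediv_mul_le a hn.ne'

lemma norm_div_sub_ediv_le_two (a b : ℤ) {n : ℤ} (hn : 0 < n) :
    ‖(a + b * I) / n - ((a / n : ℤ) + (b / n : ℤ) * I)‖ ≤ 2 := by
  have abs_div_sub_ediv_le (c : ℤ) : |(c : ℝ) / n - (c / n : ℤ)| ≤ 1 :=
    abs_le.2 ⟨by linarith [ediv_le_cast_div c hn], by linarith [cast_div_le_ediv_add_one c hn]⟩
  refine (Complex.norm_le_abs_re_add_abs_im _).trans ?_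
  have re_eq : ((a + b * I) / n - ((a / n : ℤ) + (b / n : ℤ) * I) : ℂ).re =
      (a : ℝ) / n - (a / n : ℤ) := by simp
  have im_eq : ((a + b * I) / n - ((a / n : ℤ) + (b / n : ℤ) * I) : ℂ).im =
      (b : ℝ) / n - (b / n : ℤ) := by simp
  rw [re_eq, im_eq]
  linarith [abs_div_sub_ediv_le a, abs_div_sub_ediv_le b]

namespace DyadicBall

/-- The common denominator `2 ^ 60`, written out because the kernel unfolds it constantly. -/
def scale : ℤ := 1152921504606846976

/-- An upper bound for `√(re ^ 2 + im ^ 2)`, obtained from two Newton steps. -/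
def centerNormUB (p : DyadicBall) : ℤ :=
  let n := p.re.natAbs * p.re.natAbs + p.im.natAbs * p.im.natAbs
  heronStep n (heronStep n (p.re.natAbs + p.im.natAbs + 1))

instance : Add DyadicBall := ⟨fun p q ↦ ⟨p.re + q.re, p.im + q.im, p.rad + q.rad⟩⟩

instance : Sub DyadicBall := ⟨fun p q ↦ ⟨p.re - q.re, p.im - q.im, p.rad + q.rad⟩⟩

instance : Mul DyadicBall := ⟨fun p q ↦
  ⟨(p.re * q.re - p.im * q.im) / scale, (p.re * q.im + p.im * q.re) / scale,
    (p.centerNormUB * q.rad + q.centerNormUB * p.rad + p.rad * q.rad) / scale + 3⟩⟩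

instance : SMul ℕ DyadicBall := ⟨fun n p ↦ ⟨n * p.re, n * p.im, n * p.rad⟩⟩

instance : One DyadicBall := ⟨⟨scale, 0, 0⟩⟩

/-- The complex conjugate of a disc. -/
def conj (p : DyadicBall) : DyadicBall := ⟨p.re, -p.im, p.rad⟩

/-- The quotient of a disc by a positive natural number. -/
def divNat (p : DyadicBall) (n : ℕ) : DyadicBall := ⟨p.re / n, p.im / n, p.rad / n + 3⟩

/-- The closed unit disc. -/
def unit : DyadicBall := ⟨0, 0, scale⟩

/-- A lower bound for `2 ^ 60 * ‖z‖` over all points `z` of the disc. -/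
def normLB (p : DyadicBall) : ℤ := (p.re * p.re + p.im * p.im) / p.centerNormUB - p.rad

/-- The approximate quotient of the centres of `p` and `q`, as a disc of radius zero. -/
def centerQuot (p q : DyadicBall) : DyadicBall :=
  let n := q.re * q.re + q.im * q.im
  ⟨(p.re * q.re + p.im * q.im) * scale / n, (p.im * q.re - p.re * q.im) * scale / n, 0⟩

/-- A disc containing those quotients of points of `p` and `q` which lie in the closed unit disc;
it is the unit disc itself if `q` comes too close to zero. -/
def quotInUnit (p q : DyadicBall) : DyadicBall :=
  let c := centerQuot p q
  let d := p - c * q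
  bif decide (0 < q.normLB) then
    ⟨c.re, c.im, (d.centerNormUB + d.rad) * scale / q.normLB + 1⟩
  else unit

/-- The centre of a disc, scaled by `2 ^ 60`. -/
noncomputable def center (p : DyadicBall) : ℂ := p.re + p.im * I

instance : Membership ℂ DyadicBall := ⟨fun p z ↦ ‖scale * z - p.center‖ ≤ p.rad⟩

variable {p q : DyadicBall} {z w : ℂ}

lemma mem_def : z ∈ p ↔ ‖scale * z - p.center‖ ≤ p.rad := Iff.rfl

lemma scale_pos : 0 < scale := by norm_num [scale]

lemma cast_scale_pos : (0 : ℝ) < scale := by exact_mod_cast scale_pos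

lemma cast_scale_ne_zero : (scale : ℂ) ≠ 0 := by exact_mod_cast scale_pos.ne'

lemma norm_scale : ‖(scale : ℂ)‖ = scale := by
  rw [Complex.norm_intCast, abs_of_pos cast_scale_pos]

lemma norm_scale_mul (z : ℂ) : ‖scale * z‖ = scale * ‖z‖ := by rw [norm_mul, norm_scale]

lemma centerNormUB_pos (p : DyadicBall) : 0 < p.centerNormUB :=
  Int.natCast_pos.2 (heronStep_pos _ _)

lemma norm_center_sq (p : DyadicBall) : ‖p.center‖ ^ 2 = (p.re : ℝ) ^ 2 + (p.im : ℝ) ^ 2 := by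
  rw [← Complex.normSq_eq_norm_sq, Complex.normSq_apply]
  simp [center, sq]

lemma norm_center_le (p : DyadicBall) : ‖p.center‖ ≤ p.centerNormUB := by
  refine le_heronStep (heronStep_pos _ _) (le_of_eq ?_)
  rw [norm_center_sq]
  push_cast [Nat.cast_natAbs]
  simp only [abs_mul_abs_self, sq]

lemma norm_le_of_mem (hz : z ∈ p) : scale * ‖z‖ ≤ p.centerNormUB + p.rad := by
  rw [← norm_scale_mul]
  linarith [norm_le_norm_add_norm_sub' (scale * z) p.center, norm_center_le p, mem_def.1 hz]

lemma normLB_le_of_mem (hz : z ∈ p) : p.normLB ≤ scale * ‖z‖ := by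
  have center_ge : (((p.re * p.re + p.im * p.im) / p.centerNormUB : ℤ) : ℝ) ≤ ‖p.center‖ := by
    have ub_pos : (0 : ℝ) < p.centerNormUB := by exact_mod_cast p.centerNormUB_pos
    refine (ediv_le_cast_div _ p.centerNormUB_pos).trans ((div_le_iff₀ ub_pos).2 ?_)
    push_cast
    nlinarith [norm_center_sq p, norm_center_le p, norm_nonneg p.center]
  rw [← norm_scale_mul, normLB]
  push_cast
  linarith [norm_le_norm_add_norm_sub p.center (scale * z), mem_def.1 hz,
    norm_sub_rev p.center (scale * z), norm_le_norm_add_norm_sub' p.center (scale * z)]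

lemma add_mem_add (hz : z ∈ p) (hw : w ∈ q) : z + w ∈ p + q := by
  have center_add : (p + q).center = p.center + q.center := by
    change ((p.re + q.re : ℤ) : ℂ) + (p.im + q.im : ℤ) * I = _
    push_cast [center]; ring
  have rad_add : ((p + q).rad : ℝ) = p.rad + q.rad := Int.cast_add _ _
  rw [mem_def, center_add, rad_add, mul_add, add_sub_add_comm]
  exact (norm_add_le _ _).trans (add_le_add hz hw)

lemma sub_mem_sub (hz : z ∈ p) (hw : w ∈ q) : z - w ∈ p - q := by
  have center_sub : (p - q).center = p.center - q.center := by
    change ((p.re - q.re : ℤ) : ℂ) + (p.im - q.im : ℤ) * I = _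
    push_cast [center]; ring
  have rad_sub : ((p - q).rad : ℝ) = p.rad + q.rad := Int.cast_add _ _
  rw [mem_def, center_sub, rad_sub, mul_sub, sub_sub_sub_comm]
  exact (norm_sub_le _ _).trans (add_le_add hz hw)

lemma conj_mem_conj (hz : z ∈ p) : starRingEnd ℂ z ∈ p.conj := by
  have center_conj : p.conj.center = starRingEnd ℂ p.center := by simp [center, conj]
  have sub_eq : scale * starRingEnd ℂ z - starRingEnd ℂ p.center =
      starRingEnd ℂ (scale * z - p.center) := by simp
  rw [mem_def, center_conj, sub_eq, RCLike.norm_conj]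
  exact hz

lemma natCast_mul_mem_smul (n : ℕ) (hz : z ∈ p) : n * z ∈ n • p := by
  have center_smul : (n • p).center = n * p.center := by
    change ((n * p.re : ℤ) : ℂ) + (n * p.im : ℤ) * I = _
    push_cast [center]; ring
  have rad_smul : ((n • p).rad : ℝ) = n * p.rad := by
    change ((n * p.rad : ℤ) : ℝ) = _
    push_cast; rfl
  rw [mem_def, center_smul, rad_smul, mul_left_comm, ← mul_sub, norm_mul, Complex.norm_natCast]
  exact mul_le_mul_of_nonneg_left hz n.cast_nonneg

lemma div_natCast_mem_divNat {n : ℕ} (hn : 0 < n) (hz : z ∈ p) : z / n ∈ p.divNat n := by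
  have hn' : (0 : ℤ) < n := by exact_mod_cast hn
  have rounding := norm_div_sub_ediv_le_two p.re p.im hn'
  have rad_rounding := cast_div_le_ediv_add_one p.rad hn'
  have error : ‖(scale * z - p.center) / n‖ ≤ p.rad / n := by
    rw [norm_div, Complex.norm_natCast]
    exact div_le_div_of_nonneg_right hz n.cast_nonneg
  have decomposition : scale * (z / n) - (p.divNat n).center =
      (scale * z - p.center) / n +
        ((p.re + p.im * I) / (n : ℤ) - ((p.re / n : ℤ) + (p.im / n : ℤ) * I)) := by
    simp only [center, divNat, Int.cast_natCast]; ring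
  have rad_divNat : ((p.divNat n).rad : ℝ) = (p.rad / n : ℤ) + 3 := by simp [divNat]
  rw [mem_def, decomposition, rad_divNat]
  simp only [Int.cast_natCast] at rounding rad_rounding ⊢
  linarith [norm_add_le ((scale * z - p.center) / n)
    ((p.re + p.im * I) / n - ((p.re / n : ℤ) + (p.im / n : ℤ) * I))]

lemma norm_mul_error_le (hz : z ∈ p) (hw : w ∈ q) :
    ‖(scale * z) * (scale * w) - p.center * q.center‖ ≤
      p.centerNormUB * q.rad + q.centerNormUB * p.rad + p.rad * q.rad := by
  have hz' := mem_def.1 hz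
  have hw' := mem_def.1 hw
  have rad_nonneg := (norm_nonneg _).trans hz'
  have decomposition : (scale * z) * (scale * w) - p.center * q.center =
      p.center * (scale * w - q.center) + q.center * (scale * z - p.center) +
        (scale * z - p.center) * (scale * w - q.center) := by ring
  rw [decomposition]
  refine norm_add₃_le.trans ?_
  simp only [norm_mul]
  have p_bound := norm_center_le p
  have q_bound := norm_center_le q
  have p_nonneg := (norm_nonneg _).trans p_bound
  have q_nonneg := (norm_nonneg _).trans q_bound
  gcongr

lemma mul_mem_mul (hz : z ∈ p) (hw : w ∈ q) : z * w ∈ p * q := by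
  have rounding := norm_div_sub_ediv_le_two (p.re * q.re - p.im * q.im)
    (p.re * q.im + p.im * q.re) scale_pos
  have rad_rounding := cast_div_le_ediv_add_one
    (p.centerNormUB * q.rad + q.centerNormUB * p.rad + p.rad * q.rad) scale_pos
  have error : ‖((scale * z) * (scale * w) - p.center * q.center) / scale‖ ≤
      (p.centerNormUB * q.rad + q.centerNormUB * p.rad + p.rad * q.rad) / scale := by
    rw [norm_div, norm_scale]
    exact div_le_div_of_nonneg_right (norm_mul_error_le hz hw) cast_scale_pos.le
  have center_mul : p.center * q.center =
      (p.re * q.re - p.im * q.im : ℤ) + (p.re * q.im + p.im * q.re : ℤ) * I := by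
    push_cast [center]; ring_nf; rw [Complex.I_sq]; ring
  have decomposition : scale * (z * w) - (p * q).center =
      ((scale * z) * (scale * w) - p.center * q.center) / scale +
        (((p.re * q.re - p.im * q.im : ℤ) + (p.re * q.im + p.im * q.re : ℤ) * I) / scale -
          (p * q).center) := by
    rw [← center_mul]
    have := cast_scale_ne_zero
    field_simp
    ring
  have rad_mul : ((p * q).rad : ℝ) =
      ((p.centerNormUB * q.rad + q.centerNormUB * p.rad + p.rad * q.rad) / scale : ℤ) + 3 := by
    exact_mod_cast rfl
  rw [mem_def, decomposition, rad_mul]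
  refine (norm_add_le _ _).trans ?_
  change ‖_ - (p * q).center‖ ≤ 2 at rounding
  push_cast at rounding rad_rounding error ⊢
  linarith

lemma one_mem_one : 1 ∈ (1 : DyadicBall) := by
  have center_one : (1 : DyadicBall).center = (scale : ℤ) + (0 : ℤ) * I := rfl
  simp [mem_def, center_one, show (1 : DyadicBall).rad = 0 from rfl]

lemma mem_unit_of_norm_le_one (hz : ‖z‖ ≤ 1) : z ∈ unit := by
  have center_unit : unit.center = 0 := by simp [center, unit]
  rw [mem_def, center_unit, sub_zero, norm_scale_mul]
  exact mul_le_of_le_one_right cast_scale_pos.le hz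

lemma mem_of_scale_mul_eq {re im : ℤ} (h : scale * z = re + im * I) :
    z ∈ (⟨re, im, 0⟩ : DyadicBall) := by
  simp [mem_def, center, h]

lemma ofReal_mem {x : ℝ} {c r : ℤ} (hl : (c - r : ℝ) / scale ≤ x) (hu : x ≤ (c + r : ℝ) / scale) :
    (x : ℂ) ∈ (⟨c, 0, r⟩ : DyadicBall) := by
  rw [div_le_iff₀' cast_scale_pos] at hl
  rw [le_div_iff₀' cast_scale_pos] at hu
  have cast_eq : (scale * (x : ℂ) - (⟨c, 0, r⟩ : DyadicBall).center : ℂ) =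
      (scale * x - c : ℝ) := by
    simp [center]
  rw [mem_def, cast_eq, norm_real, Real.norm_eq_abs, abs_le]
  constructor <;> linarith

lemma mem_quotInUnit (hzw : z * w ∈ p) (hw : w ∈ q) (hz : ‖z‖ ≤ 1) : z ∈ quotInUnit p q := by
  by_cases hpos : 0 < q.normLB
  swap
  · simpa [quotInUnit, hpos] using mem_unit_of_norm_le_one hz
  set c := centerQuot p q
  have hpos' : (0 : ℝ) < q.normLB := by exact_mod_cast hpos
  have c_mem : c.center / scale ∈ c :=
    mem_of_scale_mul_eq (mul_div_cancel₀ _ cast_scale_ne_zero)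
  have residual := norm_le_of_mem (sub_mem_sub hzw (mul_mem_mul c_mem hw))
  set d := p - c * q
  have quot_eq : quotInUnit p q =
      ⟨c.re, c.im, (d.centerNormUB + d.rad) * scale / q.normLB + 1⟩ := by
    simp [quotInUnit, hpos, c, d]
  have residual_eq : scale * (z * w - c.center / scale * w) = (scale * z - c.center) * w := by
    have := cast_scale_ne_zero
    field_simp
  rw [← norm_scale_mul, residual_eq, norm_mul] at residual
  have error_le : ‖scale * z - c.center‖ ≤ (d.centerNormUB + d.rad) * scale / q.normLB := by
    rw [le_div_iff₀ hpos']
    calc ‖scale * z - c.center‖ * q.normLB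
        ≤ ‖scale * z - c.center‖ * (scale * ‖w‖) :=
          mul_le_mul_of_nonneg_left (normLB_le_of_mem hw) (norm_nonneg _)
      _ = ‖scale * z - c.center‖ * ‖w‖ * scale := by ring
      _ ≤ _ := mul_le_mul_of_nonneg_right residual cast_scale_pos.le
  have rad_rounding := cast_div_le_ediv_add_one ((d.centerNormUB + d.rad) * scale) hpos
  rw [quot_eq, mem_def]
  change ‖_ - c.center‖ ≤ _
  push_cast at rad_rounding ⊢
  linarith

end DyadicBall

/-- The sum of `N / n ^ m` over `a ≤ n < a + 2 ^ k`, each term rounded down. It is evaluated by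
bisection so that the recursion depth is only `k`. -/
def powSum (N m : ℕ) : ℕ → ℕ → ℕ
  | 0, a => N / a ^ m
  | k + 1, a => powSum N m k a + powSum N m k (a + 2 ^ k)

lemma powSum_le_sum (N m k a : ℕ) :
    (powSum N m k a : ℝ) ≤ N * ∑ n ∈ Finset.range (2 ^ k), 1 / ((a + n : ℕ) : ℝ) ^ m := by
  induction k generalizing a with
  | zero => simpa [powSum, div_eq_mul_inv] using Nat.cast_div_le (α := ℝ) (m := N) (n := a ^ m)
  | succ k ih =>
    rw [powSum, pow_succ, mul_two, Finset.sum_range_add, mul_add, Nat.cast_add]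
    simpa only [add_assoc] using add_le_add (ih a) (ih (a + 2 ^ k))

lemma sum_le_powSum_add (N m k a : ℕ) :
    N * ∑ n ∈ Finset.range (2 ^ k), 1 / ((a + n : ℕ) : ℝ) ^ m ≤ powSum N m k a + 2 ^ k := by
  induction k generalizing a with
  | zero =>
    have lt_div_add_one := Nat.lt_floor_add_one (N / (a ^ m : ℕ) : ℝ)
    rw [Nat.floor_div_eq_div] at lt_div_add_one
    simpa [powSum, div_eq_mul_inv] using lt_div_add_one.le
  | succ k ih =>
    have halves := add_le_add (ih a) (ih (a + 2 ^ k))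
    rw [powSum, pow_succ, mul_two, Finset.sum_range_add, mul_add, pow_succ, Nat.cast_add]
    simp only [add_assoc] at halves ⊢
    linarith

section Telescoping

variable {f G : ℕ → ℝ} {a : ℕ}

lemma tsum_le_sum_range_add_of_le_sub (hf : Summable f) (hG : ∀ n, 0 ≤ G n)
    (h : ∀ n, a ≤ n → f n ≤ G n - G (n + 1)) :
    ∑' n, f n ≤ ∑ n ∈ Finset.range a, f n + G a := by
  rw [← hf.sum_add_tsum_nat_add a]
  gcongr
  have partial_le (M : ℕ) : ∑ i ∈ Finset.range M, f (i + a) ≤ G a - G (M + a) := by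
    have telescope := Finset.sum_range_sub' (fun i ↦ G (i + a)) M
    rw [zero_add] at telescope
    rw [← telescope]
    refine Finset.sum_le_sum fun i _ ↦ ?_
    simpa [add_right_comm] using h (i + a) (by omega)
  exact le_of_tendsto' ((summable_nat_add_iff a).2 hf).hasSum.tendsto_sum_nat
    fun M ↦ (partial_le M).trans (sub_le_self _ (hG _))

lemma sum_range_add_le_tsum_of_sub_le (hf : Summable f)
    (hG : Filter.Tendsto G Filter.atTop (nhds 0)) (h : ∀ n, a ≤ n → G n - G (n + 1) ≤ f n) :
    ∑ n ∈ Finset.range a, f n + G a ≤ ∑' n, f n := by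
  rw [← hf.sum_add_tsum_nat_add a]
  gcongr
  have le_partial (M : ℕ) : G a - G (M + a) ≤ ∑ i ∈ Finset.range M, f (i + a) := by
    have telescope := Finset.sum_range_sub' (fun i ↦ G (i + a)) M
    rw [zero_add] at telescope
    rw [← telescope]
    refine Finset.sum_le_sum fun i _ ↦ ?_
    simpa [add_right_comm] using h (i + a) (by omega)
  have G_tendsto : Filter.Tendsto (fun M ↦ G a - G (M + a)) Filter.atTop (nhds (G a)) := by
    simpa using tendsto_const_nhds.sub (hG.comp (Filter.tendsto_add_atTop_nat a))
  exact le_of_tendsto_of_tendsto' G_tendsto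
    ((summable_nat_add_iff a).2 hf).hasSum.tendsto_sum_nat le_partial

end Telescoping

/-- The real number `ζ(m)` for a natural number `m > 1`, as a series. -/
noncomputable def zetaNat (m : ℕ) : ℝ := ∑' n : ℕ, 1 / ((1 + n : ℕ) : ℝ) ^ m

lemma summable_one_div_one_add_pow {m : ℕ} (hm : 1 < m) :
    Summable fun n : ℕ ↦ 1 / ((1 + n : ℕ) : ℝ) ^ m := by
  simpa only [add_comm] using (summable_nat_add_iff 1).2 (Real.summable_one_div_nat_pow.2 hm)

lemma riemannZeta_natCast {m : ℕ} (hm : 1 < m) : riemannZeta m = zetaNat m := by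
  have first_term : (1 : ℝ) / ((0 : ℕ) : ℝ) ^ m = 0 := by simp [show m ≠ 0 by omega]
  have shift : zetaNat m = ∑' n : ℕ, 1 / (n : ℝ) ^ m := by
    rw [(Real.summable_one_div_nat_pow.2 hm).tsum_eq_zero_add, first_term, zero_add, zetaNat]
    simp only [add_comm]
  rw [zeta_nat_eq_tsum_of_gt_one hm, shift]
  push_cast
  rfl

lemma zetaNat_two : zetaNat 2 = Real.pi ^ 2 / 6 := by
  have := riemannZeta_natCast (m := 2) one_lt_two
  rw [Nat.cast_two, riemannZeta_two] at this
  exact_mod_cast this.symm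

lemma zetaNat_four : zetaNat 4 = Real.pi ^ 4 / 90 := by
  have := riemannZeta_natCast (m := 4) (by norm_num)
  rw [Nat.cast_ofNat, riemannZeta_four] at this
  exact_mod_cast this.symm

lemma one_div_succ_pow_le_sub {n : ℕ} (hn : 0 < n) (j : ℕ) :
    1 / ((1 + n : ℕ) : ℝ) ^ (j + 2) ≤ 1 / (n : ℝ) ^ (j + 1) - 1 / ((n + 1 : ℕ) : ℝ) ^ (j + 1) := by
  have : (0 : ℝ) < n := by exact_mod_cast hn
  have pow_le : (n : ℝ) ^ j ≤ (n + 1 : ℝ) ^ j := by gcongr; linarith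
  have cross : (n : ℝ) ^ j * (n * (n + 2)) ≤ (n + 1 : ℝ) ^ j * (n + 1) ^ 2 := by
    gcongr
    nlinarith
  push_cast
  rw [add_comm (1 : ℝ), div_sub_div _ _ (by positivity) (by positivity),
    div_le_div_iff₀ (by positivity) (by positivity)]
  have := mul_le_mul_of_nonneg_left cross (show 0 ≤ (n + 1 : ℝ) ^ (j + 1) by positivity)
  linear_combination this

lemma powSum_div_le_zetaNat {N : ℕ} (hN : 0 < N) (k : ℕ) {m : ℕ} (hm : 1 < m) :
    (powSum N m k 1 : ℝ) / N ≤ zetaNat m := by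
  rw [div_le_iff₀' (by positivity)]
  refine (powSum_le_sum N m k 1).trans ?_
  gcongr
  exact (summable_one_div_one_add_pow hm).sum_le_tsum _ fun n _ ↦ by positivity

lemma zetaNat_le_powSum_add {N : ℕ} (hN : 0 < N) (k j : ℕ) :
    zetaNat (j + 2) ≤ (powSum N (j + 2) k 1 + 2 ^ k) / N + 1 / (2 ^ k) ^ (j + 1) := by
  have tail := tsum_le_sum_range_add_of_le_sub (a := 2 ^ k) (G := fun n ↦ 1 / (n : ℝ) ^ (j + 1))
    (summable_one_div_one_add_pow (m := j + 2) (by omega)) (fun n ↦ by positivity)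
    fun n hn ↦ one_div_succ_pow_le_sub (Nat.two_pow_pos k |>.trans_le hn) j
  have head := sum_le_powSum_add N (j + 2) k 1
  rw [← le_div_iff₀' (by positivity)] at head
  refine tail.trans ?_
  push_cast at head ⊢
  gcongr

/-- The telescoping majorant of the tail of `ζ(3)`: `4 n⁴ + 1 = (2n² - 2n + 1)(2n² + 2n + 1)` makes
its differences equal to `4n / (4n⁴ + 1)`. -/
noncomputable def cubeTail (n : ℕ) : ℝ := 1 / (2 * (n : ℝ) ^ 2 + 2 * n + 1)

lemma cubeTail_sub (n : ℕ) :
    cubeTail n - cubeTail (n + 1) = 4 * (n + 1) / (4 * (n + 1 : ℝ) ^ 4 + 1) := by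
  have factor : 4 * (n + 1 : ℝ) ^ 4 + 1 =
      (2 * (n : ℝ) ^ 2 + 2 * n + 1) * (2 * (n + 1 : ℝ) ^ 2 + 2 * (n + 1) + 1) := by ring
  rw [factor, cubeTail, cubeTail, Nat.cast_add_one,
    div_sub_div _ _ (by positivity) (by positivity)]
  ring

lemma cubeTail_sub_le_one_div_cube (n : ℕ) :
    cubeTail n - cubeTail (n + 1) ≤ 1 / ((1 + n : ℕ) : ℝ) ^ 3 := by
  rw [cubeTail_sub, Nat.cast_add, Nat.cast_one, add_comm (1 : ℝ),
    div_le_div_iff₀ (by positivity) (by positivity)]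
  linarith

lemma one_div_cube_le_cubeTail_sub_add (n : ℕ) :
    1 / ((1 + n : ℕ) : ℝ) ^ 3 ≤
      cubeTail n - cubeTail (n + 1) + 1 / ((1 + n : ℕ) : ℝ) ^ 7 := by
  rw [cubeTail_sub, Nat.cast_add, Nat.cast_one, add_comm (1 : ℝ),
    div_add_div _ _ (by positivity) (by positivity),
    div_le_div_iff₀ (by positivity) (by positivity)]
  have : (0 : ℝ) < (n + 1) ^ 7 := by positivity
  have : (0 : ℝ) < (n + 1) ^ 3 := by positivity
  linarith

lemma tendsto_cubeTail : Filter.Tendsto cubeTail Filter.atTop (nhds 0) := by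
  refine squeeze_zero (fun n ↦ by unfold cubeTail; positivity) (fun n ↦ ?_)
    (tendsto_one_div_add_atTop_nhds_zero_nat (𝕜 := ℝ))
  unfold cubeTail
  gcongr
  nlinarith [n.cast_nonneg (α := ℝ)]

lemma powSum_add_le_zetaNat_three {N : ℕ} (hN : 0 < N) (k : ℕ) :
    (powSum N 3 k 1 : ℝ) / N + cubeTail (2 ^ k) ≤ zetaNat 3 := by
  have tail := sum_range_add_le_tsum_of_sub_le (a := 2 ^ k)
    (summable_one_div_one_add_pow (m := 3) (by norm_num)) tendsto_cubeTail
    fun n _ ↦ cubeTail_sub_le_one_div_cube n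
  have head := powSum_le_sum N 3 k 1
  rw [← div_le_iff₀' (by positivity)] at head
  exact (add_le_add_left head _).trans tail

lemma zetaNat_three_le_powSum_add {N : ℕ} (hN : 0 < N) (k : ℕ) :
    zetaNat 3 ≤ (powSum N 3 k 1 + 2 ^ k) / N + (cubeTail (2 ^ k) + 1 / (2 ^ k) ^ 6) := by
  have tail := tsum_le_sum_range_add_of_le_sub (a := 2 ^ k)
    (G := fun n ↦ cubeTail n + 1 / (n : ℝ) ^ 6)
    (summable_one_div_one_add_pow (m := 3) (by norm_num))
    (fun n ↦ by unfold cubeTail; positivity) fun n hn ↦ by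
      have := one_div_succ_pow_le_sub (Nat.two_pow_pos k |>.trans_le hn) 5
      linarith [one_div_cube_le_cubeTail_sub_add n]
  have head := sum_le_powSum_add N 3 k 1
  rw [← le_div_iff₀' (by positivity)] at head
  refine tail.trans ?_
  push_cast at head ⊢
  gcongr

/-- The rational number `q` in `π^{-m/2} Γ(m/2) = q / π^⌊m/2⌋`, for `m > 0`. -/
def gammaCoeff : ℕ → ℚ
  | 0 => 0
  | 1 => 1
  | 2 => 1
  | m + 3 => gammaCoeff (m + 1) * (m + 1) / 2

lemma gammaCoeff_add_three (m : ℕ) : gammaCoeff (m + 3) = gammaCoeff (m + 1) * (m + 1) / 2 := rfl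

lemma gammaCoeff_nonneg : ∀ m, 0 ≤ gammaCoeff m
  | 0 => le_rfl
  | 1 => zero_le_one
  | 2 => zero_le_one
  | m + 3 => by
    have := gammaCoeff_nonneg (m + 1)
    rw [gammaCoeff_add_three]
    positivity

lemma Gammaℝ_natCast_add_one : ∀ m : ℕ,
    Gammaℝ (m + 1 : ℕ) = (gammaCoeff (m + 1) / Real.pi ^ ((m + 1) / 2) : ℝ)
  | 0 => by simp [gammaCoeff]
  | 1 => by norm_num [gammaCoeff, Gammaℝ_def, cpow_neg_one]
  | m + 2 => by
    have half_add_one : (m + 2 + 1) / 2 = (m + 1) / 2 + 1 := by omega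
    have cast_eq : ((m + 2 + 1 : ℕ) : ℂ) = (m + 1 : ℕ) + 2 := by push_cast; ring
    rw [cast_eq, Gammaℝ_add_two (Nat.cast_ne_zero.2 m.succ_ne_zero), Gammaℝ_natCast_add_one m,
      gammaCoeff_add_three, half_add_one]
    push_cast
    ring

lemma completedRiemannZeta₀_natCast {m : ℕ} (hm : 1 < m) : completedRiemannZeta₀ m =
    (gammaCoeff m * zetaNat m / Real.pi ^ (m / 2) - 1 / (m * (m - 1)) : ℝ) := by
  have m_ne : (m : ℂ) ≠ 0 := by exact_mod_cast (show m ≠ 0 by omega)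
  have m_sub_ne : (m : ℂ) - 1 ≠ 0 := sub_ne_zero.2 (by exact_mod_cast hm.ne')
  have one_sub_ne : 1 - (m : ℂ) ≠ 0 := sub_ne_zero.2 (by exact_mod_cast hm.ne)
  have Gamma_eq : Gammaℝ m = (gammaCoeff m / Real.pi ^ (m / 2) : ℝ) := by
    obtain ⟨n, rfl⟩ : ∃ n, m = n + 1 := ⟨m - 1, by omega⟩
    exact Gammaℝ_natCast_add_one n
  have Gamma_ne : Gammaℝ m ≠ 0 := Gammaℝ_ne_zero_of_re_pos (by simpa using by omega)
  have zeta_eq := riemannZeta_def_of_ne_zero m_ne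
  rw [eq_div_iff Gamma_ne, completedRiemannZeta_eq, riemannZeta_natCast hm, Gamma_eq] at zeta_eq
  have solved : completedRiemannZeta₀ m =
      zetaNat m * (gammaCoeff m / Real.pi ^ (m / 2) : ℝ) + 1 / m + 1 / (1 - m) := by
    rw [zeta_eq]
    ring
  rw [solved]
  push_cast
  field_simp
  ring

/-- A rational lower bound for `π`. -/
def piLB : ℚ := 314159265358979323846 / 10 ^ 20

/-- A rational upper bound for `π`. -/
def piUB : ℚ := 314159265358979323847 / 10 ^ 20

lemma piLB_pow_le (k : ℕ) : ((piLB ^ k : ℚ) : ℝ) ≤ Real.pi ^ k := by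
  have := Real.pi_gt_d20
  rw [Rat.cast_pow]
  gcongr <;> norm_num [piLB] at *
  linarith

lemma pi_pow_le_piUB (k : ℕ) : Real.pi ^ k ≤ (piUB ^ k : ℚ) := by
  have := Real.pi_lt_d20
  rw [Rat.cast_pow]
  gcongr
  norm_num [piUB] at *
  linarith

open DyadicBall in
lemma completedRiemannZeta₀_natCast_mem {m : ℕ} (hm : 1 < m) {l h : ℚ} (l_nonneg : 0 ≤ l)
    (hl : l ≤ zetaNat m) (hh : zetaNat m ≤ h) {c r : ℤ}
    (lower : (c - r) / scale + 1 / (m * (m - 1)) ≤ gammaCoeff m * l / piUB ^ (m / 2))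
    (upper : gammaCoeff m * h / piLB ^ (m / 2) ≤ (c + r) / scale + 1 / (m * (m - 1))) :
    completedRiemannZeta₀ m ∈ (⟨c, 0, r⟩ : DyadicBall) := by
  have l_nonneg' : (0 : ℝ) ≤ l := by exact_mod_cast l_nonneg
  have coeff_nonneg : (0 : ℝ) ≤ gammaCoeff m := by exact_mod_cast gammaCoeff_nonneg m
  have piLB_pow_pos : (0 : ℝ) < (piLB ^ (m / 2) : ℚ) := by norm_num [piLB]
  have : 0 < Real.pi ^ (m / 2) := by positivity
  have lower' : (c - r : ℝ) / scale + 1 / (m * (m - 1)) ≤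
      gammaCoeff m * l / (piUB ^ (m / 2) : ℚ) := by exact_mod_cast lower
  have upper' : gammaCoeff m * h / (piLB ^ (m / 2) : ℚ) ≤
      (c + r : ℝ) / scale + 1 / (m * (m - 1)) := by exact_mod_cast upper
  have value_ge : (gammaCoeff m * l / (piUB ^ (m / 2) : ℚ) : ℝ) ≤
      gammaCoeff m * zetaNat m / Real.pi ^ (m / 2) := by
    gcongr
    · exact mul_nonneg coeff_nonneg (l_nonneg'.trans hl)
    · exact pi_pow_le_piUB _
  have value_le : gammaCoeff m * zetaNat m / Real.pi ^ (m / 2) ≤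
      (gammaCoeff m * h / (piLB ^ (m / 2) : ℚ) : ℝ) := by
    gcongr
    · exact mul_nonneg coeff_nonneg (l_nonneg'.trans (hl.trans hh))
    · exact piLB_pow_le _
  rw [completedRiemannZeta₀_natCast hm]
  set x : ℝ := gammaCoeff m * zetaNat m / Real.pi ^ (m / 2) - 1 / (m * (m - 1))
  have x_ge : (c - r : ℝ) / scale ≤ x := by linarith
  have x_le : x ≤ (c + r : ℝ) / scale := by linarith
  exact ofReal_mem x_ge x_le

open DyadicBall in
lemma completedRiemannZeta₀_natCast_mem_of_powSum (j k : ℕ) {c r : ℤ}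
    (lower : (c - r) / scale + 1 / ((j + 2 : ℕ) * ((j + 2 : ℕ) - 1)) ≤
      gammaCoeff (j + 2) * (powSum (10 ^ 30) (j + 2) k 1 / (10 ^ 30 : ℕ)) / piUB ^ ((j + 2) / 2))
    (upper : gammaCoeff (j + 2) * ((powSum (10 ^ 30) (j + 2) k 1 + 2 ^ k) / (10 ^ 30 : ℕ) +
      1 / (2 ^ k) ^ (j + 1)) / piLB ^ ((j + 2) / 2) ≤
        (c + r) / scale + 1 / ((j + 2 : ℕ) * ((j + 2 : ℕ) - 1))) :
    completedRiemannZeta₀ (j + 2 : ℕ) ∈ (⟨c, 0, r⟩ : DyadicBall) := by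
  refine completedRiemannZeta₀_natCast_mem (by omega) (by positivity) ?_ ?_ lower upper
  · have lower_zeta := powSum_div_le_zetaNat (N := 10 ^ 30) (m := j + 2)
      (by positivity) k (by omega)
    push_cast at lower_zeta ⊢
    exact lower_zeta
  · have upper_zeta := zetaNat_le_powSum_add (N := 10 ^ 30) (by positivity) k j
    push_cast at upper_zeta ⊢
    exact upper_zeta

namespace DyadicBall

/-- Enclosures of `completedRiemannZeta₀ m` for `m = 2, …, 10`. -/
def zetaNodes : List (ℕ × DyadicBall) :=
  [(2, ⟨27207535869670082, 0, 2000⟩), (3, ⟨28415631298285404, 0, 2000⟩),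
   (4, ⟨30355198571410553, 0, 2000⟩), (5, ⟨33200750466380199, 0, 2000⟩),
   (6, ⟨37226009449628827, 0, 2000⟩), (7, ⟨42850630841755042, 0, 2000⟩),
   (8, ⟨50716900622374505, 0, 2000⟩), (9, ⟨61816107115677196, 0, 2000⟩),
   (10, ⟨77699089370832302, 0, 2000⟩)]

lemma completedRiemannZeta₀_two_mem :
    completedRiemannZeta₀ (2 : ℕ) ∈ (⟨27207535869670082, 0, 2000⟩ : DyadicBall) := by
  have lower := piLB_pow_le 2
  have upper := pi_pow_le_piUB 2
  refine completedRiemannZeta₀_natCast_mem (l := piLB ^ 2 / 6) (h := piUB ^ 2 / 6) one_lt_two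
    (by positivity) ?_ ?_ (by decide +kernel) (by decide +kernel) <;>
  · rw [zetaNat_two, Rat.cast_div, Rat.cast_ofNat]
    gcongr

lemma completedRiemannZeta₀_three_mem :
    completedRiemannZeta₀ (3 : ℕ) ∈ (⟨28415631298285404, 0, 2000⟩ : DyadicBall) := by
  have lower := powSum_add_le_zetaNat_three (N := 10 ^ 30) (by positivity) 8
  have upper := zetaNat_three_le_powSum_add (N := 10 ^ 30) (by positivity) 8
  unfold cubeTail at lower upper
  refine completedRiemannZeta₀_natCast_mem
    (l := powSum (10 ^ 30) 3 8 1 / (10 ^ 30 : ℕ) +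
      1 / (2 * (2 ^ 8 : ℕ) ^ 2 + 2 * (2 ^ 8 : ℕ) + 1))
    (h := (powSum (10 ^ 30) 3 8 1 + 2 ^ 8) / (10 ^ 30 : ℕ) +
      (1 / (2 * (2 ^ 8 : ℕ) ^ 2 + 2 * (2 ^ 8 : ℕ) + 1) + 1 / (2 ^ 8) ^ 6)) (by norm_num)
    (by positivity) ?_ ?_ (by decide +kernel) (by decide +kernel)
  · push_cast at lower ⊢
    exact lower
  · push_cast at upper ⊢
    exact upper

lemma completedRiemannZeta₀_four_mem :
    completedRiemannZeta₀ (4 : ℕ) ∈ (⟨30355198571410553, 0, 2000⟩ : DyadicBall) := by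
  have lower := piLB_pow_le 4
  have upper := pi_pow_le_piUB 4
  refine completedRiemannZeta₀_natCast_mem (l := piLB ^ 4 / 90) (h := piUB ^ 4 / 90) (by norm_num)
    (by positivity) ?_ ?_ (by decide +kernel) (by decide +kernel) <;>
  · rw [zetaNat_four, Rat.cast_div, Rat.cast_ofNat]
    gcongr

theorem completedRiemannZeta₀_mem_of_mem_zetaNodes :
    ∀ p ∈ zetaNodes, completedRiemannZeta₀ p.1 ∈ p.2 := by
  simp only [zetaNodes, List.forall_mem_cons, List.not_mem_nil, false_imp_iff, implies_true,
    and_true]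
  refine ⟨completedRiemannZeta₀_two_mem, completedRiemannZeta₀_three_mem,
    completedRiemannZeta₀_four_mem, completedRiemannZeta₀_natCast_mem_of_powSum 3 12 ?_ ?_,
    completedRiemannZeta₀_natCast_mem_of_powSum 4 10 ?_ ?_,
    completedRiemannZeta₀_natCast_mem_of_powSum 5 8 ?_ ?_,
    completedRiemannZeta₀_natCast_mem_of_powSum 6 7 ?_ ?_,
    completedRiemannZeta₀_natCast_mem_of_powSum 7 6 ?_ ?_,
    completedRiemannZeta₀_natCast_mem_of_powSum 8 6 ?_ ?_⟩ <;> decide +kernel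

/-- An enclosure of the constant `A = π / 3 - 1`. -/
def ballA : DyadicBall := ⟨54415071739340165, 0, 10⟩

lemma A_mem_ballA : A ∈ ballA := by
  have lower := Real.pi_gt_d20
  have upper := Real.pi_lt_d20
  have A_eq : A = (Real.pi / 3 - 1 : ℝ) := by simp [A]
  rw [A_eq]
  refine ofReal_mem ?_ ?_ <;> norm_num [scale] at * <;> linarith

/-- The disc about the origin whose radius bounds the norms of the points of `p`. -/
def normBall (p : DyadicBall) : DyadicBall := ⟨0, 0, p.centerNormUB + p.rad⟩

/-- The exact number `n / 4`, as a disc of radius zero. -/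
def quarter (n : ℕ) : DyadicBall := ⟨n * 288230376151711744, 0, 0⟩

/-- Given discs `p` containing the values `f (n / 4)` at the nodes `n` of a list, and a disc `p₀`
containing `f (n₀ / 4)`, discs containing the divided differences
`64 * (f (n / 4) - f (n₀ / 4)) / (n / 4 - n₀ / 4)`. The factor `64` compensates their decay. -/
def dividedDifferences (n₀ : ℕ) (p₀ : DyadicBall) (L : List (ℕ × DyadicBall)) :
    List (ℕ × DyadicBall) :=
  L.map fun v ↦ (v.1, (256 • (v.2 - p₀)).divNat (v.1 - n₀))

/-- Discs containing the first `k` coefficients of the Newton interpolation of a list of values,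
each coefficient being multiplied by a power of `64` as in `dividedDifferences`. -/
def newtonTable : ℕ → List (ℕ × DyadicBall) → List (ℕ × DyadicBall)
  | 0, _ => []
  | _, [] => []
  | k + 1, v :: L => v :: newtonTable k (dividedDifferences v.1 v.2 L)

/-- Horner evaluation of a Newton table at the points of a disc. The last coefficient is not used
as such but bounds the remainder. -/
def newtonEval (z : DyadicBall) : List (ℕ × DyadicBall) → DyadicBall
  | [] => ⟨0, 0, 0⟩
  | [v] => v.2.normBall
  | v :: L => v.2 + (z - quarter v.1).divNat 64 * newtonEval z L

variable {p q : DyadicBall} {z w : ℂ}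

lemma mem_normBall (hz : z ∈ p) (hwz : ‖w‖ ≤ ‖z‖) : w ∈ p.normBall := by
  have center_eq : p.normBall.center = 0 := by simp [center, normBall]
  have rad_eq : (p.normBall.rad : ℝ) = p.centerNormUB + p.rad := by simp [normBall]
  rw [mem_def, center_eq, rad_eq, sub_zero, norm_scale_mul]
  exact (mul_le_mul_of_nonneg_left hwz cast_scale_pos.le).trans (norm_le_of_mem hz)

lemma div_four_mem_quarter (n : ℕ) : ((n / 4 : ℝ) : ℂ) ∈ quarter n := by
  refine mem_of_scale_mul_eq ?_
  push_cast [scale]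
  ring

lemma mem_dividedDifferences {f g : ℂ → ℂ} {n₀ : ℕ} {p₀ : DyadicBall} {L : List (ℕ × DyadicBall)}
    (hfg : ∀ z, f z = f (n₀ / 4 : ℝ) + (z - (n₀ / 4 : ℝ)) * g z) (h₀ : f (n₀ / 4 : ℝ) ∈ p₀)
    (lt_nodes : ∀ v ∈ L, n₀ < v.1) (hL : ∀ v ∈ L, f (v.1 / 4 : ℝ) ∈ v.2) :
    ∀ v ∈ dividedDifferences n₀ p₀ L, (64 : ℝ) * g (v.1 / 4 : ℝ) ∈ v.2 := by
  simp only [dividedDifferences, List.forall_mem_map]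
  intro v hv
  have sub_pos : 0 < v.1 - n₀ := Nat.sub_pos_of_lt (lt_nodes v hv)
  have sub_ne : ((v.1 - n₀ : ℕ) : ℂ) ≠ 0 := by exact_mod_cast sub_pos.ne'
  convert div_natCast_mem_divNat sub_pos
    (natCast_mul_mem_smul 256 (sub_mem_sub (hL v hv) h₀)) using 1
  rw [eq_div_iff sub_ne, hfg (v.1 / 4 : ℝ), Nat.cast_sub (lt_nodes v hv).le]
  push_cast
  ring

lemma pairwise_dividedDifferences {n₀ : ℕ} {p₀ : DyadicBall} {L : List (ℕ × DyadicBall)}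
    (hL : L.Pairwise (·.1 < ·.1)) : (dividedDifferences n₀ p₀ L).Pairwise (·.1 < ·.1) :=
  List.pairwise_map.2 hL

-- The remainder is a positive multiple of a divided difference of `f`, which again has nonnegative
-- coefficients, so on the disc `‖z‖ ≤ n / 4` it is dominated by its value at `n / 4`.
theorem mem_newtonEval_newtonTable (hz : z ∈ p) : ∀ {f : ℂ → ℂ} {L : List (ℕ × DyadicBall)},
    HasNonnegPowerSeries f → L.Pairwise (·.1 < ·.1) → (∀ v ∈ L, f (v.1 / 4 : ℝ) ∈ v.2) →
    (∃ v ∈ L, ‖z‖ ≤ v.1 / 4) → f z ∈ newtonEval p (newtonTable L.length L)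
  | _, [], _, _, _, ⟨_, hv, _⟩ => absurd hv List.not_mem_nil
  | f, [v], hf, _, mem_values, bound => by
    have norm_z_le : ‖z‖ ≤ (v.1 / 4 : ℝ) := by simpa using bound
    exact mem_normBall (mem_values v List.mem_cons_self) (hf.norm_le norm_z_le)
  | f, v :: w :: L, hf, sorted, mem_values, bound => by
    rw [List.pairwise_cons] at sorted
    rw [List.forall_mem_cons] at mem_values
    obtain ⟨g, hg, hfg⟩ := hf.exists_eq_add_sub_mul (c := v.1 / 4) (by positivity)
    have bound_tail : ∃ u ∈ w :: L, ‖z‖ ≤ u.1 / 4 := by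
      obtain ⟨u, hu, hzu⟩ := bound
      rcases List.mem_cons.1 hu with rfl | hu
      · have : (u.1 : ℝ) ≤ w.1 := by exact_mod_cast (sorted.1 w List.mem_cons_self).le
        exact ⟨w, List.mem_cons_self, by linarith⟩
      · exact ⟨u, hu, hzu⟩
    have tail_mem := mem_newtonEval_newtonTable hz (hg.const_mul (c := 64) (by norm_num))
      (pairwise_dividedDifferences sorted.2)
      (mem_dividedDifferences hfg mem_values.1 sorted.1 mem_values.2)
      (by simpa [dividedDifferences] using bound_tail)
    convert add_mem_add mem_values.1 (mul_mem_mul (div_natCast_mem_divNat (n := 64) (by norm_num)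
      (sub_mem_sub hz (div_four_mem_quarter v.1))) tail_mem) using 1
    · simp [newtonTable, newtonEval, dividedDifferences]
    · rw [hfg z]
      push_cast
      ring
termination_by _ L => L.length
decreasing_by simp [dividedDifferences]

/-- The Newton table of `w ^ 2 ↦ completedRiemannZeta₀ (1 / 2 + w)` computed from `zetaNodes`; the
integer `m` is the node `w ^ 2 = (2 * m - 1) ^ 2 / 4`. -/
def zetaTable : List (ℕ × DyadicBall) :=
  [(9, ⟨27207535869670082, 0, 2000⟩), (25, ⟨19329526857845152, 0, 64003⟩),
   (49, ⟨8698820621801194, 0, 955800⟩), (81, ⟨2809182577559432, 0, 10507331⟩),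
   (121, ⟨697995826230534, 0, 93435484⟩), (169, ⟨139555231461653, 0, 697124456⟩),
   (225, ⟨23167778511323, 0, 4478831001⟩), (289, ⟨3268601253224, 0, 25264672139⟩),
   (361, ⟨398998208817, 0, 127014888038⟩)]

/-- A disc containing `chi (1 / 2 + w)` for the points `w` of the given disc in `‖w‖ ≤ 19 / 2`. -/
def chiBall (w : DyadicBall) : DyadicBall :=
  1 + (w * w - quarter 1) * newtonEval (w * w) zetaTable

/-- A disc containing `chiRatio (1 / 2 + w)` for the points `w` of the given disc which satisfy
`-1 / 2 ≤ w.re` and `‖w‖ ≤ 17 / 2`. -/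
def chiRatioBall (w : DyadicBall) : DyadicBall := quotInUnit (chiBall w) (chiBall (w + 1))

lemma newtonTable_zetaNodes :
    newtonTable (zetaNodes.map fun v ↦ ((2 * v.1 - 1) ^ 2, v.2)).length
      (zetaNodes.map fun v ↦ ((2 * v.1 - 1) ^ 2, v.2)) = zetaTable := rfl

lemma completedRiemannZeta₀_half_add_mem (hz : w ^ 2 ∈ p) (hw : ‖w‖ ≤ 19 / 2) :
    completedRiemannZeta₀ (1 / 2 + w) ∈ newtonEval p zetaTable := by
  obtain ⟨f, hf, zeta_eq⟩ := exists_hasNonnegPowerSeries_completedRiemannZeta₀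
  have node_value {m : ℕ} (hm : 1 ≤ m) :
      f (((2 * m - 1) ^ 2 : ℕ) / 4 : ℝ) = completedRiemannZeta₀ m := by
    have node_eq : (m : ℂ) = 1 / 2 + (m - 1 / 2) := by ring
    rw [node_eq, zeta_eq]
    push_cast [(by lia : 1 ≤ 2 * m)]
    ring_nf
  have one_le_node : ∀ v ∈ zetaNodes, 1 ≤ v.1 := by decide
  rw [zeta_eq, ← newtonTable_zetaNodes]
  apply mem_newtonEval_newtonTable hz hf
  · decide
  · rw [List.forall_mem_map]
    intro v hv
    rw [node_value (one_le_node v hv)]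
    exact completedRiemannZeta₀_mem_of_mem_zetaNodes v hv
  · refine ⟨(361, ⟨77699089370832302, 0, 2000⟩), by simp [zetaNodes], ?_⟩
    rw [norm_pow]
    norm_num
    nlinarith [norm_nonneg w]

lemma chi_half_add_mem_chiBall (hw : w ∈ p) (norm_w_le : ‖w‖ ≤ 19 / 2) :
    chi (1 / 2 + w) ∈ chiBall p := by
  have sq_mem : w ^ 2 ∈ p * p := sq w ▸ mul_mem_mul hw hw
  have chi_eq : chi (1 / 2 + w) =
      1 + (w ^ 2 - (1 / 4 : ℝ)) * completedRiemannZeta₀ (1 / 2 + w) := by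
    unfold chi
    push_cast
    ring
  rw [chi_eq]
  have quarter_mem := div_four_mem_quarter 1
  rw [Nat.cast_one] at quarter_mem
  exact add_mem_add one_mem_one (mul_mem_mul (sub_mem_sub sq_mem quarter_mem)
    (completedRiemannZeta₀_half_add_mem sq_mem norm_w_le))

lemma chiRatio_half_add_mem_chiRatioBall (hw : w ∈ p) (re_ge : -1 / 2 ≤ w.re)
    (norm_w_le : ‖w‖ ≤ 17 / 2) : chiRatio (1 / 2 + w) ∈ chiRatioBall p := by
  have re_nonneg : 0 ≤ (1 / 2 + w).re := by norm_num; linarith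
  have norm_add_one_le : ‖w + 1‖ ≤ 19 / 2 := by
    have := norm_add_le w 1
    rw [norm_one] at this
    linarith
  have mul_chi : chiRatio (1 / 2 + w) * chi (1 / 2 + (w + 1)) = chi (1 / 2 + w) := by
    rw [chiRatio, ← add_assoc, div_mul_cancel₀ _ (chi_add_one_ne_zero re_nonneg)]
  refine mem_quotInUnit ?_ (chi_half_add_mem_chiBall (add_mem_add hw one_mem_one) norm_add_one_le)
    (norm_chiRatio_le_one re_nonneg)
  rw [mul_chi]
  exact chi_half_add_mem_chiBall hw (by linarith)

end DyadicBall

section PseudohyperbolicDisc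

variable {a u : ℂ} {δ : ℝ}

lemma normSq_euclidean_eq_mul_pseudohyperbolic (a u : ℂ) (δ : ℝ) :
    (δ * (1 - normSq a)) ^ 2 - normSq (u * (1 - δ ^ 2 * normSq a : ℝ) - a * (1 - δ ^ 2 : ℝ)) =
      (1 - δ ^ 2 * normSq a) *
        (δ ^ 2 * normSq (1 - starRingEnd ℂ a * u) - normSq (u - a)) := by
  simp only [normSq_apply, sub_re, sub_im, mul_re, mul_im, ofReal_re, ofReal_im, conj_re, conj_im,
    one_re, one_im]
  ring

lemma norm_sub_le_of_pseudohyperbolic (ha : ‖a‖ ≤ 1) (hδ : 0 ≤ δ) (hδ' : δ ≤ 1)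
    (h : ‖u - a‖ ≤ δ * ‖1 - starRingEnd ℂ a * u‖) :
    ‖u * (1 - δ ^ 2 * normSq a : ℝ) - a * (1 - δ ^ 2 : ℝ)‖ ≤ δ * (1 - normSq a) := by
  have normSq_le : normSq a ≤ 1 := by
    rw [normSq_eq_norm_sq]
    exact pow_le_one₀ (norm_nonneg a) ha
  have denom_nonneg : 0 ≤ 1 - δ ^ 2 * normSq a :=
    sub_nonneg.2 (mul_le_one₀ (pow_le_one₀ hδ hδ') (normSq_nonneg a) normSq_le)
  have hyperbolic : normSq (u - a) ≤ δ ^ 2 * normSq (1 - starRingEnd ℂ a * u) := by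
    rw [normSq_eq_norm_sq, normSq_eq_norm_sq, ← mul_pow]
    exact pow_le_pow_left₀ (norm_nonneg _) h 2
  refine abs_le_of_sq_le_sq' ?_ (mul_nonneg hδ (sub_nonneg.2 normSq_le)) |>.2
  rw [← normSq_eq_norm_sq]
  linarith [normSq_euclidean_eq_mul_pseudohyperbolic a u δ,
    mul_nonneg denom_nonneg (sub_nonneg.2 hyperbolic)]

lemma exists_eq_add_of_pseudohyperbolic (ha : ‖a‖ ≤ 1) (hδ : 0 ≤ δ) (hδ' : δ ≤ 1)
    (h : ‖u - a‖ ≤ δ * ‖1 - starRingEnd ℂ a * u‖) :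
    ∃ e : ℂ, ‖e‖ ≤ δ ∧ u * (1 - (δ ^ 2 : ℝ) * (a * starRingEnd ℂ a)) =
      a * (1 - (δ ^ 2 : ℝ)) + (1 - a * starRingEnd ℂ a) * e := by
  have norm_le := norm_sub_le_of_pseudohyperbolic ha hδ hδ' h
  set D := u * (1 - δ ^ 2 * normSq a : ℝ) - a * (1 - δ ^ 2 : ℝ) with D_eq
  have denom_nonneg : 0 ≤ 1 - normSq a := by
    rw [normSq_eq_norm_sq]
    exact sub_nonneg.2 (pow_le_one₀ (norm_nonneg a) ha)
  have mul_quot : (1 - normSq a : ℝ) * (D / (1 - normSq a : ℝ)) = D := by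
    rcases denom_nonneg.eq_or_lt with denom_eq | denom_pos
    · have D_zero : D = 0 := by simpa [← denom_eq] using norm_le
      simp [D_zero]
    · exact mul_div_cancel₀ D (by exact_mod_cast denom_pos.ne')
  refine ⟨D / (1 - normSq a : ℝ), ?_, ?_⟩
  · rw [norm_div, norm_real, Real.norm_of_nonneg denom_nonneg]
    exact div_le_of_le_mul₀ denom_nonneg hδ norm_le
  · push_cast at mul_quot D_eq
    rw [mul_conj]
    push_cast
    rw [mul_quot, D_eq]
    ring

end PseudohyperbolicDisc

lemma norm_chiRatio_sub_le {t t₀ : ℝ} {j : ℕ} (h : |t - t₀| ≤ j / 1024) :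
    ‖chiRatio (1 / 2 + t * I) - chiRatio (1 / 2 + t₀ * I)‖ ≤ j / √(1024 ^ 2 + j ^ 2) *
      ‖1 - starRingEnd ℂ (chiRatio (1 / 2 + t₀ * I)) * chiRatio (1 / 2 + t * I)‖ := by
  have schwarzPick := schwarzPick_halfPlane (f := chiRatio) (s := 1 / 2 + t * I)
    (c := 1 / 2 + t₀ * I) (fun z hz ↦ differentiableAt_chiRatio hz.le)
    (fun z hz ↦ norm_chiRatio_le_one hz.le) (by norm_num) (by norm_num)
  have sub_eq : (1 / 2 + t * I - (1 / 2 + t₀ * I) : ℂ) = (t - t₀ : ℝ) * I := by push_cast; ring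
  have add_eq : (1 / 2 + t * I + starRingEnd ℂ (1 / 2 + t₀ * I) : ℂ) = 1 + (t - t₀ : ℝ) * I := by
    simp only [map_add, map_mul, map_div₀, map_one, map_ofNat, conj_ofReal, conj_I]
    push_cast
    ring
  have norm_add : ‖(1 + (t - t₀ : ℝ) * I : ℂ)‖ = √(1 + (t - t₀) ^ 2) := by
    simpa using norm_add_mul_I 1 (t - t₀)
  rw [sub_eq, add_eq, norm_add, norm_mul, norm_real, norm_I, mul_one, Real.norm_eq_abs]
    at schwarzPick
  have sqrt_pos : 0 < √(1 + (t - t₀) ^ 2) := by positivity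
  have quot_le : |t - t₀| / √(1 + (t - t₀) ^ 2) ≤ j / √(1024 ^ 2 + j ^ 2) := by
    rw [div_le_div_iff₀ sqrt_pos (by positivity)]
    refine abs_le_of_sq_le_sq' ?_ (by positivity) |>.2
    rw [mul_pow, mul_pow, Real.sq_sqrt (by positivity), Real.sq_sqrt (by positivity)]
    nlinarith [abs_nonneg (t - t₀), sq_abs (t - t₀)]
  rw [← le_div_iff₀ sqrt_pos] at schwarzPick
  calc _ ≤ _ := schwarzPick
    _ = |t - t₀| / √(1 + (t - t₀) ^ 2) * _ := by ring
    _ ≤ _ := mul_le_mul_of_nonneg_right quot_le (norm_nonneg _)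

namespace DyadicBall

/-- A disc containing every `u` at pseudohyperbolic distance at most `δ` from some point of `a` in
the closed unit disc, where `δ ^ 2` lies in `dsq` and `2 ^ 60 * δ ≤ d`. -/
def schwarzPickBall (a dsq : DyadicBall) (d : ℤ) : DyadicBall :=
  quotInUnit (a * (1 - dsq) + (1 - a * a.conj) * ⟨0, 0, d⟩) (1 - dsq * (a * a.conj))

/-- A disc containing `δ ^ 2` for the pseudohyperbolic distance `δ = j / √(1024 ^ 2 + j ^ 2)` of two
points of the line `Re s = 1 / 2` at distance `j / 1024`. -/
def pseudoDistSq (j : ℕ) : DyadicBall := ((j * j) • (1 : DyadicBall)).divNat (1024 * 1024 + j * j)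

/-- An upper bound for `2 ^ 60 * j / √(1024 ^ 2 + j ^ 2)`, obtained from eight Newton steps. -/
def pseudoDistUB (j : ℕ) : ℕ :=
  (heronStep (1152921504606846976 ^ 2 * (j * j) / (1024 * 1024 + j * j) + 1))^[8]
    1152921504606846976

/-- The point `m / 1024 * I`, as a disc of radius zero. -/
def imagPoint (m : ℕ) : DyadicBall := ⟨0, m * 1125899906842624, 0⟩

/-- A disc containing `chiRatio (1 / 2 + t * I)` for `|t - m / 1024| ≤ e / 1024`. The numbers
`chiRatio (1 / 2 + t * I)` are computed for `t ≤ 7` only; beyond, the Schwarz-Pick lemma is applied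
with the fixed centre `t = 7`. -/
def chiRatioLineBall (m e : ℕ) : DyadicBall :=
  bif decide (m ≤ 7168) then
    schwarzPickBall (chiRatioBall (imagPoint m)) (pseudoDistSq e) (pseudoDistUB e)
  else
    schwarzPickBall (chiRatioBall (imagPoint 7168)) (pseudoDistSq (m + e - 7168))
      (pseudoDistUB (m + e - 7168))

variable {p q : DyadicBall} {a u : ℂ} {δ : ℝ} {d : ℤ}

lemma mem_of_norm_le (h : scale * ‖u‖ ≤ d) : u ∈ (⟨0, 0, d⟩ : DyadicBall) := by
  rw [mem_def, show (⟨0, 0, d⟩ : DyadicBall).center = 0 by simp [center], sub_zero, norm_scale_mul]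
  exact h

lemma mem_schwarzPickBall (ha : a ∈ p) (norm_a_le : ‖a‖ ≤ 1) (norm_u_le : ‖u‖ ≤ 1) (hδ : 0 ≤ δ)
    (hδ' : δ ≤ 1) (sq_mem : ((δ ^ 2 : ℝ) : ℂ) ∈ q) (hd : scale * δ ≤ d)
    (h : ‖u - a‖ ≤ δ * ‖1 - starRingEnd ℂ a * u‖) : u ∈ schwarzPickBall p q d := by
  obtain ⟨e, norm_e_le, mul_eq⟩ := exists_eq_add_of_pseudohyperbolic norm_a_le hδ hδ' h
  have normSq_mem := mul_mem_mul ha (conj_mem_conj ha)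
  have e_mem : e ∈ (⟨0, 0, d⟩ : DyadicBall) :=
    mem_of_norm_le ((mul_le_mul_of_nonneg_left norm_e_le cast_scale_pos.le).trans hd)
  refine mem_quotInUnit ?_ (sub_mem_sub one_mem_one (mul_mem_mul sq_mem normSq_mem)) norm_u_le
  rw [mul_eq]
  exact add_mem_add (mul_mem_mul ha (sub_mem_sub one_mem_one sq_mem))
    (mul_mem_mul (sub_mem_sub one_mem_one normSq_mem) e_mem)

lemma sq_mem_pseudoDistSq (j : ℕ) :
    (((j / √(1024 ^ 2 + j ^ 2)) ^ 2 : ℝ) : ℂ) ∈ pseudoDistSq j := by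
  convert div_natCast_mem_divNat (n := 1024 * 1024 + j * j) (by positivity)
    (natCast_mul_mem_smul (j * j) one_mem_one) using 1
  · rfl
  · rw [div_pow, Real.sq_sqrt (by positivity)]
    push_cast
    ring

lemma le_pseudoDistUB (j : ℕ) : scale * (j / √(1024 ^ 2 + j ^ 2) : ℝ) ≤ pseudoDistUB j := by
  have iterate_pos (n k : ℕ) : 0 < (heronStep n)^[k] 1152921504606846976 := by
    cases k with
    | zero => norm_num
    | succ k => rw [Function.iterate_succ_apply']; exact heronStep_pos _ _
  rw [pseudoDistUB, Function.iterate_succ_apply']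
  refine le_heronStep (iterate_pos _ 7) ?_
  have sq_eq : (scale * (j / √(1024 ^ 2 + j ^ 2) : ℝ)) ^ 2 =
      ((1152921504606846976 ^ 2 * (j * j) : ℕ) : ℝ) / (1024 * 1024 + j * j : ℕ) := by
    rw [mul_pow, div_pow, Real.sq_sqrt (by positivity)]
    push_cast [scale]
    ring
  rw [sq_eq, ← Nat.floor_div_eq_div (K := ℝ), Nat.cast_add_one]
  exact (Nat.lt_floor_add_one _).le

lemma chiRatio_mem_schwarzPickBall {t t₀ : ℝ} {j : ℕ} (h : |t - t₀| ≤ j / 1024)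
    (h₀ : chiRatio (1 / 2 + t₀ * I) ∈ p) :
    chiRatio (1 / 2 + t * I) ∈ schwarzPickBall p (pseudoDistSq j) (pseudoDistUB j) := by
  have norm_le (x : ℝ) : ‖chiRatio (1 / 2 + x * I)‖ ≤ 1 := norm_chiRatio_le_one (by norm_num)
  have dist_le_one : j / √(1024 ^ 2 + j ^ 2) ≤ 1 :=
    div_le_one_of_le₀ (Real.le_sqrt_of_sq_le (by linarith [sq_nonneg (1024 : ℝ)])) (by positivity)
  exact mem_schwarzPickBall h₀ (norm_le t₀) (norm_le t) (by positivity) dist_le_one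
    (sq_mem_pseudoDistSq j) (by exact_mod_cast le_pseudoDistUB j) (norm_chiRatio_sub_le h)

lemma chiRatio_mem_chiRatioBall_imagPoint {m : ℕ} (hm : m ≤ 7168) :
    chiRatio (1 / 2 + (m / 1024 : ℝ) * I) ∈ chiRatioBall (imagPoint m) := by
  have hm' : (m : ℝ) ≤ 7168 := by exact_mod_cast hm
  refine chiRatio_half_add_mem_chiRatioBall (mem_of_scale_mul_eq ?_) (by norm_num) ?_
  · push_cast [scale]
    ring
  · rw [norm_mul, norm_I, mul_one, norm_real, Real.norm_of_nonneg (by positivity)]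
    linarith

lemma chiRatio_mem_chiRatioLineBall {t : ℝ} {m e : ℕ} (h : |t - m / 1024| ≤ e / 1024) :
    chiRatio (1 / 2 + t * I) ∈ chiRatioLineBall m e := by
  by_cases hm : m ≤ 7168
  · rw [chiRatioLineBall, decide_eq_true hm, cond_true]
    exact chiRatio_mem_schwarzPickBall h (chiRatio_mem_chiRatioBall_imagPoint hm)
  · have dist_le : |t - (7168 : ℕ) / 1024| ≤ (m + e - 7168 : ℕ) / 1024 := by
      have hm' : (7168 : ℝ) ≤ m := by exact_mod_cast (not_le.1 hm).le
      rw [abs_le] at h ⊢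
      push_cast [(by lia : 7168 ≤ m + e)]
      constructor <;> linarith
    rw [chiRatioLineBall, decide_eq_false hm, cond_false]
    exact chiRatio_mem_schwarzPickBall dist_le (chiRatio_mem_chiRatioBall_imagPoint le_rfl)

end DyadicBall

/-- The function `f1 s`, divided by `(s - 1) * chi (s + 1) * chi (3 * s)`, is this cubic polynomial
at `h = 1`, `u = chi s / chi (s + 1)` and `v = chi (3 * s - 1) / chi (3 * s)`. It is made
homogeneous of degree three in `(s, h)` so that large `s` can be treated as small `h`. -/
noncomputable def homogF (s h u v : ℂ) : ℂ :=
  (s - h) * (3 * s - 2 * h) * (h + A * (s - h)) -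
    h * ((s - 2 * h) * u) * (2 * (s - h) + (s + h) * v)

/-- The cubic polynomial in `s` with zeros `ρ`, its conjugate and `-5`, made homogeneous in
`(s, h)`. For the zero `ρ` of `f1`, its argument on the line `Re s = 1 / 2` stays close to that of
`homogF`; the third zero `-5` was found by experiment. -/
noncomputable def comparisonCubic (ρ s h : ℂ) : ℂ :=
  (s - ρ * h) * (s - starRingEnd ℂ ρ * h) * (s + 5 * h)

namespace DyadicBall

/-- A disc containing the values of `homogF` on the four given discs. -/
def homogFBall (s h u v : DyadicBall) : DyadicBall :=
  (s - h) * (3 • s - 2 • h) * (h + ballA * (s - h)) -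
    h * ((s - 2 • h) * u) * (2 • (s - h) + (s + h) * v)

/-- A disc containing the values of `comparisonCubic` on the three given discs. -/
def comparisonCubicBall (ρ s h : DyadicBall) : DyadicBall :=
  (s - ρ * h) * (s - ρ.conj * h) * (s + 5 • h)

/-- The disc of radius about `1 / 100` around the approximate zero `0.9003 + 2.0888 * I` of
`f1`. -/
def rhoBall : DyadicBall := ⟨1037975230597544332, 2408222438822781963, 11529215046068480⟩

/-- The assertion that a disc lies in the open right half-plane. -/
def PosRe (p : DyadicBall) : Prop := p.rad < p.re

instance (p : DyadicBall) : Decidable p.PosRe := Int.decLt _ _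

/-- The part of the line `Re s = 1 / 2` with `|Im s - m / 1024| ≤ e / 1024`. -/
def lineBall (m e : ℕ) : DyadicBall :=
  ⟨576460752303423488, m * 1125899906842624, e * 1125899906842624⟩

/-- The numbers `h / 2 + I` for real `h` with `|h - m / 1024| ≤ 1 / 1024`. -/
def scaledLineBall (m : ℕ) : DyadicBall := ⟨m * 562949953421312, scale, 562949953421312⟩

/-- The real numbers `h` with `|h - m / 1024| ≤ 1 / 1024`. -/
def realBall (m : ℕ) : DyadicBall := ⟨m * 1125899906842624, 0, 1125899906842624⟩

variable {p s h u v ρ : DyadicBall} {z x y a b r : ℂ}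

lemma re_pos_of_mem (hp : p.PosRe) (hz : z ∈ p) : 0 < z.re := by
  have rad_lt : (p.rad : ℝ) < p.re := by exact_mod_cast hp
  have re_eq : (scale * z - p.center).re = scale * z.re - p.re := by simp [center]
  have re_le := (abs_re_le_norm _).trans hz
  rw [re_eq, abs_le] at re_le
  exact pos_of_mul_pos_right (by linarith) cast_scale_pos.le

lemma homogF_mem_homogFBall (hx : x ∈ s) (hy : y ∈ h) (ha : a ∈ u) (hb : b ∈ v) :
    homogF x y a b ∈ homogFBall s h u v := by
  have sub_mem := sub_mem_sub hx hy
  exact sub_mem_sub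
    (mul_mem_mul
      (mul_mem_mul sub_mem (sub_mem_sub (natCast_mul_mem_smul 3 hx) (natCast_mul_mem_smul 2 hy)))
      (add_mem_add hy (mul_mem_mul A_mem_ballA sub_mem)))
    (mul_mem_mul (mul_mem_mul hy (mul_mem_mul (sub_mem_sub hx (natCast_mul_mem_smul 2 hy)) ha))
      (add_mem_add (natCast_mul_mem_smul 2 sub_mem) (mul_mem_mul (add_mem_add hx hy) hb)))

lemma comparisonCubic_mem_comparisonCubicBall (hr : r ∈ ρ) (hx : x ∈ s) (hy : y ∈ h) :
    comparisonCubic r x y ∈ comparisonCubicBall ρ s h :=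
  mul_mem_mul
    (mul_mem_mul (sub_mem_sub hx (mul_mem_mul hr hy))
      (sub_mem_sub hx (mul_mem_mul (conj_mem_conj hr) hy)))
    (add_mem_add hx (natCast_mul_mem_smul 5 hy))

lemma re_homogF_mul_conj_pos (hx : x ∈ s) (hy : y ∈ h) (ha : a ∈ u) (hb : b ∈ v) (hr : r ∈ ρ)
    (check : (homogFBall s h u v * (comparisonCubicBall ρ s h).conj).PosRe) :
    0 < (homogF x y a b * starRingEnd ℂ (comparisonCubic r x y)).re :=
  re_pos_of_mem check (mul_mem_mul (homogF_mem_homogFBall hx hy ha hb)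
    (conj_mem_conj (comparisonCubic_mem_comparisonCubicBall hr hx hy)))

lemma mem_lineBall {t : ℝ} {m e : ℕ} (ht : |t - m / 1024| ≤ e / 1024) :
    (1 / 2 + t * I : ℂ) ∈ lineBall m e := by
  have sub_eq : (scale * (1 / 2 + t * I) - (lineBall m e).center : ℂ) =
      (scale * (t - m / 1024) : ℝ) * I := by
    push_cast [center, lineBall, scale]
    ring
  rw [mem_def, sub_eq, norm_mul, norm_I, mul_one, norm_real, Real.norm_eq_abs, abs_mul,
    abs_of_pos cast_scale_pos]
  refine (mul_le_mul_of_nonneg_left ht cast_scale_pos.le).trans_eq ?_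
  push_cast [lineBall, scale]
  ring

lemma mem_realBall {t : ℝ} {m : ℕ} (ht : |t - m / 1024| ≤ 1 / 1024) : (t : ℂ) ∈ realBall m := by
  rw [abs_le] at ht
  apply ofReal_mem <;> push_cast [scale] <;> linarith

lemma mem_scaledLineBall {t : ℝ} {m : ℕ} (ht : |t - m / 1024| ≤ 1 / 1024) :
    (t / 2 + I : ℂ) ∈ scaledLineBall m := by
  have sub_eq : (scale * (t / 2 + I) - (scaledLineBall m).center : ℂ) =
      (scale / 2 * (t - m / 1024) : ℝ) := by
    push_cast [center, scaledLineBall, scale]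
    ring
  rw [mem_def, sub_eq, norm_real, Real.norm_eq_abs, abs_mul,
    abs_of_pos (half_pos cast_scale_pos)]
  refine (mul_le_mul_of_nonneg_left ht (half_pos cast_scale_pos).le).trans_eq ?_
  push_cast [scaledLineBall, scale]
  ring

/-- The product of the discs for `homogF` and for the conjugate of `comparisonCubic` on
`lineBall m e`. -/
def lineProduct (m e : ℕ) : DyadicBall :=
  homogFBall (lineBall m e) 1 (chiRatioLineBall m e) (chiRatioLineBall (3 * m) (3 * e)) *
    (comparisonCubicBall rhoBall (lineBall m e) 1).conj

/-- The product of the discs for `homogF` and for the conjugate of `comparisonCubic` on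
`scaledLineBall m` and `realBall m`, for arbitrary `u` and `v` in the closed unit disc. -/
def scaledLineProduct (m : ℕ) : DyadicBall :=
  homogFBall (scaledLineBall m) (realBall m) unit unit *
    (comparisonCubicBall rhoBall (scaledLineBall m) (realBall m)).conj

set_option maxRecDepth 100000 in
lemma posRe_lineProduct_near : ∀ k < 229, (lineProduct (12 + 2 * 12 * k) 12).PosRe := by
  decide +kernel

set_option maxRecDepth 100000 in
lemma posRe_lineProduct_far : ∀ k < 118, (lineProduct (5560 + 2 * 64 * k) 64).PosRe := by
  decide +kernel

set_option maxRecDepth 100000 in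
lemma posRe_scaledLineProduct : ∀ k < 26, (scaledLineProduct (1 + 2 * k)).PosRe := by
  decide +kernel

end DyadicBall

/-- The quotient of `f1 s` by `(s - 1) * chi (s + 1) * chi (3 * s)`. -/
noncomputable def reducedF (s : ℂ) : ℂ := homogF s 1 (chiRatio s) (chiRatio (3 * s - 1))

lemma exists_lt_abs_sub_center_le {t a d : ℝ} {n : ℕ} (hd : 0 < d) (hat : a ≤ t)
    (htn : t < a + 2 * d * n) : ∃ k < n, |t - (a + d + 2 * d * k)| ≤ d := by
  have quot_nonneg : 0 ≤ (t - a) / (2 * d) := div_nonneg (sub_nonneg.2 hat) (by positivity)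
  have floor_le := Nat.floor_le quot_nonneg
  have lt_floor := Nat.lt_floor_add_one ((t - a) / (2 * d))
  rw [le_div_iff₀ (by positivity)] at floor_le
  rw [div_lt_iff₀ (by positivity)] at lt_floor
  refine ⟨⌊(t - a) / (2 * d)⌋₊, ?_, abs_le.2 ⟨by linarith, by linarith⟩⟩
  rw [Nat.floor_lt quot_nonneg, div_lt_iff₀ (by positivity)]
  linarith

section Boundary

open DyadicBall

variable {ρ : ℂ} {t : ℝ}

lemma re_reducedF_mul_conj_pos_of_posRe_lineProduct {m e : ℕ} (hρ : ρ ∈ rhoBall)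
    (check : (lineProduct m e).PosRe) (ht : |t - m / 1024| ≤ e / 1024) :
    0 < (reducedF (1 / 2 + t * I) * starRingEnd ℂ (comparisonCubic ρ (1 / 2 + t * I) 1)).re := by
  have three_mul : |3 * t - (3 * m : ℕ) / 1024| ≤ (3 * e : ℕ) / 1024 := by
    rw [abs_le] at ht ⊢
    push_cast
    constructor <;> linarith
  have v_mem := chiRatio_mem_chiRatioLineBall three_mul
  have arg_eq : (1 / 2 + (3 * t : ℝ) * I : ℂ) = 3 * (1 / 2 + t * I) - 1 := by push_cast; ring
  rw [arg_eq] at v_mem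
  exact re_homogF_mul_conj_pos (mem_lineBall ht) one_mem_one (chiRatio_mem_chiRatioLineBall ht)
    v_mem hρ check

lemma re_reducedF_mul_conj_pos_of_le_twenty (hρ : ρ ∈ rhoBall) (ht : 0 ≤ t) (ht' : t ≤ 20) :
    0 < (reducedF (1 / 2 + t * I) * starRingEnd ℂ (comparisonCubic ρ (1 / 2 + t * I) 1)).re := by
  by_cases near : t < 5496 / 1024
  · obtain ⟨k, hk, hkt⟩ := exists_lt_abs_sub_center_le (t := t) (a := 0) (d := 12 / 1024)
      (n := 229) (by norm_num) ht (by push_cast; linarith)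
    refine re_reducedF_mul_conj_pos_of_posRe_lineProduct hρ (posRe_lineProduct_near k hk) ?_
    convert hkt using 2 <;> push_cast <;> ring
  · obtain ⟨k, hk, hkt⟩ := exists_lt_abs_sub_center_le (t := t) (a := 5496 / 1024)
      (d := 64 / 1024) (n := 118) (by norm_num) (not_lt.1 near) (by push_cast; linarith)
    refine re_reducedF_mul_conj_pos_of_posRe_lineProduct hρ (posRe_lineProduct_far k hk) ?_
    convert hkt using 2 <;> push_cast <;> ring

lemma re_homogF_scaled_mul_conj_pos {u v : ℂ} (hρ : ρ ∈ rhoBall) (ht : 0 ≤ t) (ht' : t ≤ 1 / 20)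
    (hu : ‖u‖ ≤ 1) (hv : ‖v‖ ≤ 1) :
    0 < (homogF (t / 2 + I) t u v * starRingEnd ℂ (comparisonCubic ρ (t / 2 + I) t)).re := by
  obtain ⟨k, hk, hkt⟩ := exists_lt_abs_sub_center_le (t := t) (a := 0) (d := 1 / 1024)
    (n := 26) (by norm_num) ht (by push_cast; linarith)
  have grid : |t - (1 + 2 * k : ℕ) / 1024| ≤ 1 / 1024 := by
    convert hkt using 2
    push_cast
    ring
  exact re_homogF_mul_conj_pos (mem_scaledLineBall grid) (mem_realBall grid)
    (mem_unit_of_norm_le_one hu) (mem_unit_of_norm_le_one hv) hρ (posRe_scaledLineProduct k hk)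

lemma homogF_smul (c s h u v : ℂ) : homogF (c * s) (c * h) u v = c ^ 3 * homogF s h u v := by
  simp only [homogF]
  ring

lemma comparisonCubic_smul (c ρ s h : ℂ) :
    comparisonCubic ρ (c * s) (c * h) = c ^ 3 * comparisonCubic ρ s h := by
  simp only [comparisonCubic]
  ring

lemma re_reducedF_mul_conj_pos_of_twenty_le (hρ : ρ ∈ rhoBall) (ht : 20 ≤ t) :
    0 < (reducedF (1 / 2 + t * I) * starRingEnd ℂ (comparisonCubic ρ (1 / 2 + t * I) 1)).re := by
  have t_pos : 0 < t := by linarith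
  have scaled_pos := re_homogF_scaled_mul_conj_pos (u := chiRatio (1 / 2 + t * I))
    (v := chiRatio (3 * (1 / 2 + t * I) - 1)) hρ (inv_nonneg.2 t_pos.le)
    (by rw [inv_le_comm₀ t_pos (by norm_num)]; linarith)
    (norm_chiRatio_le_one (by norm_num)) (norm_chiRatio_le_one (by norm_num))
  have t_ne : (t : ℂ) ≠ 0 := by exact_mod_cast t_pos.ne'
  have s_eq : (1 / 2 + t * I : ℂ) = t * ((t⁻¹ : ℝ) / 2 + I) := by
    push_cast
    field_simp
  have h_eq : (1 : ℂ) = t * (t⁻¹ : ℝ) := by push_cast; field_simp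
  have product_eq : reducedF (1 / 2 + t * I) *
      starRingEnd ℂ (comparisonCubic ρ (1 / 2 + t * I) 1) =
      (t ^ 6 : ℝ) * (homogF ((t⁻¹ : ℝ) / 2 + I) (t⁻¹ : ℝ) (chiRatio (1 / 2 + t * I))
        (chiRatio (3 * (1 / 2 + t * I) - 1)) *
        starRingEnd ℂ (comparisonCubic ρ ((t⁻¹ : ℝ) / 2 + I) (t⁻¹ : ℝ))) := by
    rw [reducedF]
    generalize chiRatio (1 / 2 + t * I) = u
    generalize chiRatio (3 * (1 / 2 + t * I) - 1) = v
    rw [s_eq, h_eq, homogF_smul, comparisonCubic_smul, map_mul, map_pow, conj_ofReal]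
    push_cast
    ring
  rw [product_eq, re_ofReal_mul]
  positivity

lemma A_conj : starRingEnd ℂ A = A := by simp [A, map_ofNat]

lemma reducedF_conj (s : ℂ) : reducedF (starRingEnd ℂ s) = starRingEnd ℂ (reducedF s) := by
  have arg_eq : 3 * starRingEnd ℂ s - 1 = starRingEnd ℂ (3 * s - 1) := by simp [map_ofNat]
  rw [reducedF, reducedF, homogF, homogF, arg_eq, chiRatio_conj, chiRatio_conj]
  simp [A_conj, map_ofNat]

lemma comparisonCubic_conj (ρ s : ℂ) :
    comparisonCubic ρ (starRingEnd ℂ s) 1 = starRingEnd ℂ (comparisonCubic ρ s 1) := by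
  simp only [comparisonCubic, map_mul, map_sub, map_add, conj_conj, map_one, map_ofNat]
  ring

lemma re_reducedF_mul_conj_pos (hρ : ρ ∈ rhoBall) (t : ℝ) :
    0 < (reducedF (1 / 2 + t * I) * starRingEnd ℂ (comparisonCubic ρ (1 / 2 + t * I) 1)).re := by
  wlog ht : 0 ≤ t generalizing t
  · have conj_eq : (1 / 2 + t * I : ℂ) = starRingEnd ℂ (1 / 2 + (-t : ℝ) * I) := by
      simp [map_ofNat]
    rw [conj_eq, reducedF_conj, comparisonCubic_conj, ← map_mul, conj_re]
    exact this (-t) (by linarith)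
  rcases le_total t 20 with h | h
  · exact re_reducedF_mul_conj_pos_of_le_twenty hρ ht h
  · exact re_reducedF_mul_conj_pos_of_twenty_le hρ h

end Boundary

lemma exists_eq_zero_of_mul_norm_sub_le {f : ℂ → ℂ} {c : ℂ} {r κ : ℝ} (hr : 0 < r) (hκ : 0 < κ)
    (hf : DiffContOnCl ℂ f (Metric.ball c r))
    (expanding : ∀ z ∈ Metric.closedBall c r, κ * ‖z - c‖ ≤ ‖f z - f c‖)
    (small : ‖f c‖ < κ * r / 2) : ∃ z ∈ Metric.closedBall c r, f z = 0 := by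
  have frequently_ne : ∃ᶠ z in nhds c, f z ≠ f c := by
    refine (Filter.Eventually.frequently (f := nhdsWithin c {c}ᶜ) ?_).filter_mono
      nhdsWithin_le_nhds
    filter_upwards [nhdsWithin_le_nhds (Metric.closedBall_mem_nhds c hr), self_mem_nhdsWithin]
      with z hz hzc hfz
    have norm_pos : 0 < ‖z - c‖ := norm_pos_iff.2 (sub_ne_zero.2 hzc)
    have := expanding z hz
    rw [hfz, sub_self, norm_zero] at this
    exact this.not_gt (mul_pos hκ norm_pos)
  have image := hf.ball_subset_image_closedBall hr (ε := κ * r) (fun z hz ↦ by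
    simpa [mem_sphere_iff_norm.1 hz] using expanding z (Metric.sphere_subset_closedBall hz))
    frequently_ne
  exact image (by simpa using small)

/-- The divided difference of `fun s ↦ homogF s 1 u v` at the points `s` and `c`. -/
noncomputable def homogFSlope (s c u v : ℂ) : ℂ :=
  3 * A * ((s - 1) * (s - 1) + (s - 1) * (c - 1) + (c - 1) * (c - 1)) +
    (3 * 1 + A) * (s + c - 2 * 1) + 1 - 2 * (s + c - 3 * 1) * u - (s + c - 1) * (u * v)

lemma homogF_sub_homogF (s c u v u₀ v₀ : ℂ) :
    homogF s 1 u v - homogF c 1 u₀ v₀ = (s - c) * homogFSlope s c u₀ v₀ -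
      (u - u₀) * ((s - 2 * 1) * (2 * (s - 1) + (s + 1) * v)) -
      (v - v₀) * (u₀ * ((s + 1) * (s - 2 * 1))) := by
  simp only [homogF, homogFSlope]
  ring

lemma norm_chiRatio_sub_mul_le {s c : ℂ} (hs : 0 < s.re) (hc : 0 < c.re) :
    ‖chiRatio s - chiRatio c‖ * (s.re + c.re) ≤
      ‖s - c‖ * ‖1 - starRingEnd ℂ (chiRatio c) * chiRatio s‖ := by
  have le_norm : s.re + c.re ≤ ‖s + starRingEnd ℂ c‖ := by
    simpa using re_le_norm (s + starRingEnd ℂ c)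
  exact (mul_le_mul_of_nonneg_left le_norm (norm_nonneg _)).trans
    (schwarzPick_halfPlane (fun _ hz ↦ differentiableAt_chiRatio hz.le)
      (fun _ hz ↦ norm_chiRatio_le_one hz.le) hs hc)

namespace DyadicBall

/-- A disc containing the values of `homogFSlope` on the four given discs. -/
def homogFSlopeBall (s c u v : DyadicBall) : DyadicBall :=
  (3 • ballA) * ((s - 1) * (s - 1) + (s - 1) * (c - 1) + (c - 1) * (c - 1)) +
    (3 • 1 + ballA) * (s + c - 2 • 1) + 1 - (2 • (s + c - 3 • 1)) * u - (s + c - 1) * (u * v)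

/-- The centre of `rhoBall`, as a disc of radius zero. -/
def rhoPoint : DyadicBall := ⟨1037975230597544332, 2408222438822781963, 0⟩

/-- The centre of `rhoBall`. -/
noncomputable def rhoCenter : ℂ := rhoBall.center / scale

/-- The number `1 / 2`, as a disc of radius zero. -/
def half : DyadicBall := ⟨576460752303423488, 0, 0⟩

/-- A disc containing `chiRatio rhoCenter`. -/
def rhoRatioBall : DyadicBall := chiRatioBall (rhoPoint - half)

/-- A disc containing `chiRatio (3 * rhoCenter - 1)`. -/
def rhoRatioBall' : DyadicBall := chiRatioBall (3 • rhoPoint - 1 - half)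

/-- A disc containing `u` if `n * ‖u - a‖ ≤ ‖1 - conj a * u‖` for some point `a` of `p`, where `u`
and `a` are in the closed unit disc. -/
def schwarzPickBallInv (p : DyadicBall) (n : ℕ) : DyadicBall :=
  schwarzPickBall p ((1 : DyadicBall).divNat (n ^ 2)) (scale / n + 1)

/-- A disc containing `chiRatio s` for all `s` in `rhoBall`. -/
def nearRatioBall : DyadicBall := schwarzPickBallInv rhoRatioBall 177

/-- A disc containing `chiRatio (3 * s - 1)` for all `s` in `rhoBall`. -/
def nearRatioBall' : DyadicBall := schwarzPickBallInv rhoRatioBall' 111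

variable {p s c u v : DyadicBall} {z x y a b : ℂ}

lemma norm_le_div_of_mem {m n : ℕ} (hz : z ∈ p) (hn : 0 < n)
    (check : n * (p.centerNormUB + p.rad) ≤ m * scale) : ‖z‖ ≤ m / n := by
  have hn' : (0 : ℝ) < n := by exact_mod_cast hn
  have check' : n * (p.centerNormUB + p.rad : ℝ) ≤ m * scale := by exact_mod_cast check
  rw [le_div_iff₀' hn', ← mul_le_mul_iff_left₀ cast_scale_pos]
  linarith [mul_le_mul_of_nonneg_left (norm_le_of_mem hz) hn'.le]

lemma div_le_norm_of_mem {m n : ℕ} (hz : z ∈ p) (hn : 0 < n)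
    (check : m * scale ≤ n * p.normLB) : m / n ≤ ‖z‖ := by
  have hn' : (0 : ℝ) < n := by exact_mod_cast hn
  have check' : m * (scale : ℝ) ≤ n * p.normLB := by exact_mod_cast check
  rw [div_le_iff₀' hn', ← mul_le_mul_iff_left₀ cast_scale_pos]
  linarith [mul_le_mul_of_nonneg_left (normLB_le_of_mem hz) hn'.le]

lemma mem_iff_norm_sub_le : z ∈ p ↔ ‖z - p.center / scale‖ ≤ p.rad / scale := by
  have sub_eq : scale * z - p.center = scale * (z - p.center / scale) := by
    have := cast_scale_ne_zero
    field_simp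
  rw [mem_def, sub_eq, norm_scale_mul, le_div_iff₀' cast_scale_pos]

lemma homogFSlope_mem_homogFSlopeBall (hx : x ∈ s) (hy : y ∈ c) (ha : a ∈ u) (hb : b ∈ v) :
    homogFSlope x y a b ∈ homogFSlopeBall s c u v := by
  have hx₁ := sub_mem_sub hx one_mem_one
  have hy₁ := sub_mem_sub hy one_mem_one
  have hxy := add_mem_add hx hy
  have quadratic_mem := add_mem_add (add_mem_add (mul_mem_mul hx₁ hx₁) (mul_mem_mul hx₁ hy₁))
    (mul_mem_mul hy₁ hy₁)
  have linear_mem := mul_mem_mul (add_mem_add (natCast_mul_mem_smul 3 one_mem_one) A_mem_ballA)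
    (sub_mem_sub hxy (natCast_mul_mem_smul 2 one_mem_one))
  have polynomial_mem := add_mem_add
    (add_mem_add (mul_mem_mul (natCast_mul_mem_smul 3 A_mem_ballA) quadratic_mem) linear_mem)
    one_mem_one
  exact sub_mem_sub
    (sub_mem_sub polynomial_mem (mul_mem_mul
      (natCast_mul_mem_smul 2 (sub_mem_sub hxy (natCast_mul_mem_smul 3 one_mem_one))) ha))
    (mul_mem_mul (sub_mem_sub hxy one_mem_one) (mul_mem_mul ha hb))

lemma mem_schwarzPickBallInv {n : ℕ} (hn : 0 < n) (ha : a ∈ p) (norm_a_le : ‖a‖ ≤ 1)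
    (norm_z_le : ‖z‖ ≤ 1) (h : n * ‖z - a‖ ≤ ‖1 - starRingEnd ℂ a * z‖) :
    z ∈ schwarzPickBallInv p n := by
  have hn' : (0 : ℝ) < n := by exact_mod_cast hn
  refine mem_schwarzPickBall (δ := (n : ℝ)⁻¹) ha norm_a_le norm_z_le (by positivity)
    (inv_le_one_of_one_le₀ (by exact_mod_cast hn)) ?_ ?_ ((le_inv_mul_iff₀ hn').2 h)
  · convert div_natCast_mem_divNat (n := n ^ 2) (by positivity) one_mem_one using 1
    push_cast
    rw [inv_pow, one_div]
  · simpa [div_eq_mul_inv] using cast_div_le_ediv_add_one scale (n := n) (by exact_mod_cast hn)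

lemma chiRatio_mem_schwarzPickBallInv {n : ℕ} (hn : 0 < n) (hx : 0 < x.re) (hy : 0 < y.re)
    (hp : chiRatio y ∈ p) (h : n * ‖x - y‖ ≤ x.re + y.re) :
    chiRatio x ∈ schwarzPickBallInv p n := by
  refine mem_schwarzPickBallInv hn hp (norm_chiRatio_le_one hy.le) (norm_chiRatio_le_one hx.le) ?_
  refine le_of_mul_le_mul_right ?_ (add_pos hx hy)
  calc n * ‖chiRatio x - chiRatio y‖ * (x.re + y.re)
      ≤ n * (‖x - y‖ * ‖1 - starRingEnd ℂ (chiRatio y) * chiRatio x‖) := by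
        rw [mul_assoc]
        exact mul_le_mul_of_nonneg_left (norm_chiRatio_sub_mul_le hx hy) n.cast_nonneg
    _ = n * ‖x - y‖ * ‖1 - starRingEnd ℂ (chiRatio y) * chiRatio x‖ := by ring
    _ ≤ (x.re + y.re) * ‖1 - starRingEnd ℂ (chiRatio y) * chiRatio x‖ :=
        mul_le_mul_of_nonneg_right h (norm_nonneg _)
    _ = _ := mul_comm _ _

lemma rhoCenter_mem_rhoPoint : rhoCenter ∈ rhoPoint :=
  mem_of_scale_mul_eq (mul_div_cancel₀ _ cast_scale_ne_zero)

lemma rhoCenter_mem_rhoBall : rhoCenter ∈ rhoBall := by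
  rw [mem_iff_norm_sub_le, rhoCenter, sub_self, norm_zero]
  norm_num [rhoBall, scale]

lemma half_mem_half : (1 / 2 : ℂ) ∈ half := mem_of_scale_mul_eq (by norm_num [scale])

lemma abs_sub_le_of_mem_rhoBall (hz : z ∈ rhoBall) :
    |z.re - 0.9003| ≤ 0.0101 ∧ |z.im - 2.0888| ≤ 0.0101 := by
  have re_le := (abs_re_le_norm _).trans hz
  have im_le := (abs_im_le_norm _).trans hz
  have re_eq : (scale * z - rhoBall.center).re = scale * z.re - rhoBall.re := by simp [center]
  have im_eq : (scale * z - rhoBall.center).im = scale * z.im - rhoBall.im := by simp [center]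
  rw [re_eq, abs_le] at re_le
  rw [im_eq, abs_le] at im_le
  simp only [rhoBall, scale, Int.cast_ofNat] at re_le im_le
  constructor <;> rw [abs_le] <;> constructor <;> linarith

lemma lt_re_of_mem_rhoBall (hz : z ∈ rhoBall) : 0.89 < z.re := by
  linarith [(abs_le.1 (abs_sub_le_of_mem_rhoBall hz).1).1]

lemma chiRatio_rhoCenter_mem : chiRatio rhoCenter ∈ rhoRatioBall := by
  have arg_eq : rhoCenter = 1 / 2 + (rhoCenter - 1 / 2) := by ring
  have sub_half_mem := sub_mem_sub rhoCenter_mem_rhoPoint half_mem_half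
  have norm_le := norm_le_div_of_mem (m := 17) (n := 2) sub_half_mem two_pos (by decide +kernel)
  have re_ge := lt_re_of_mem_rhoBall rhoCenter_mem_rhoBall
  rw [arg_eq]
  exact chiRatio_half_add_mem_chiRatioBall sub_half_mem (by norm_num; linarith)
    (by simpa using norm_le)

lemma chiRatio_three_mul_rhoCenter_mem : chiRatio (3 * rhoCenter - 1) ∈ rhoRatioBall' := by
  have arg_eq : 3 * rhoCenter - 1 = 1 / 2 + (3 * rhoCenter - 1 - 1 / 2) := by ring
  have sub_half_mem := sub_mem_sub (sub_mem_sub (natCast_mul_mem_smul 3 rhoCenter_mem_rhoPoint)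
    one_mem_one) half_mem_half
  have norm_le := norm_le_div_of_mem (m := 17) (n := 2) sub_half_mem two_pos (by decide +kernel)
  have re_ge := lt_re_of_mem_rhoBall rhoCenter_mem_rhoBall
  rw [arg_eq]
  exact chiRatio_half_add_mem_chiRatioBall sub_half_mem (by norm_num; linarith)
    (by simpa using norm_le)

end DyadicBall

section ZeroExistence

open DyadicBall

variable {s : ℂ}

lemma norm_sub_rhoCenter_le (hs : s ∈ rhoBall) : ‖s - rhoCenter‖ ≤ 0.010001 :=
  (mem_iff_norm_sub_le.1 hs).trans (by norm_num [rhoBall, scale])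

lemma three_mul_sub_one_re (s : ℂ) : (3 * s - 1).re = 3 * s.re - 1 := by simp

lemma three_mul_sub_one_sub (s c : ℂ) : 3 * s - 1 - (3 * c - 1) = 3 * (s - c) := by ring

lemma chiRatio_mem_nearRatioBall (hs : s ∈ rhoBall) : chiRatio s ∈ nearRatioBall := by
  have hs' := lt_re_of_mem_rhoBall hs
  have hc := lt_re_of_mem_rhoBall rhoCenter_mem_rhoBall
  have dist_le := norm_sub_rhoCenter_le hs
  refine chiRatio_mem_schwarzPickBallInv (by norm_num) ?_ ?_ chiRatio_rhoCenter_mem ?_ <;>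
    push_cast <;> linarith

lemma chiRatio_three_mul_mem_nearRatioBall (hs : s ∈ rhoBall) :
    chiRatio (3 * s - 1) ∈ nearRatioBall' := by
  have hs' := lt_re_of_mem_rhoBall hs
  have hc := lt_re_of_mem_rhoBall rhoCenter_mem_rhoBall
  have dist_le := norm_sub_rhoCenter_le hs
  refine chiRatio_mem_schwarzPickBallInv (by norm_num) ?_ ?_ chiRatio_three_mul_rhoCenter_mem ?_
  · linarith [three_mul_sub_one_re s]
  · linarith [three_mul_sub_one_re rhoCenter]
  · rw [three_mul_sub_one_sub, norm_mul, norm_ofNat, three_mul_sub_one_re, three_mul_sub_one_re]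
    push_cast
    linarith

lemma norm_chiRatio_sub_rhoCenter_le (hs : s ∈ rhoBall) :
    ‖chiRatio s - chiRatio rhoCenter‖ ≤ 9 / 178 * ‖s - rhoCenter‖ := by
  have hs' := lt_re_of_mem_rhoBall hs
  have hc := lt_re_of_mem_rhoBall rhoCenter_mem_rhoBall
  have schwarzPick := norm_chiRatio_sub_mul_le (s := s) (c := rhoCenter) (by linarith)
    (by linarith)
  have factor_le := norm_le_div_of_mem (m := 9) (n := 100) (sub_mem_sub one_mem_one
    (mul_mem_mul (conj_mem_conj chiRatio_rhoCenter_mem) (chiRatio_mem_nearRatioBall hs)))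
    (by norm_num) (by decide +kernel)
  push_cast at factor_le
  nlinarith [norm_nonneg (chiRatio s - chiRatio rhoCenter), norm_nonneg (s - rhoCenter)]

lemma norm_chiRatio_three_mul_sub_rhoCenter_le (hs : s ∈ rhoBall) :
    ‖chiRatio (3 * s - 1) - chiRatio (3 * rhoCenter - 1)‖ ≤ 54 / 334 * ‖s - rhoCenter‖ := by
  have hs' := lt_re_of_mem_rhoBall hs
  have hc := lt_re_of_mem_rhoBall rhoCenter_mem_rhoBall
  have schwarzPick := norm_chiRatio_sub_mul_le (s := 3 * s - 1) (c := 3 * rhoCenter - 1)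
    (by linarith [three_mul_sub_one_re s]) (by linarith [three_mul_sub_one_re rhoCenter])
  have factor_le := norm_le_div_of_mem (m := 18) (n := 100) (sub_mem_sub one_mem_one
    (mul_mem_mul (conj_mem_conj chiRatio_three_mul_rhoCenter_mem)
      (chiRatio_three_mul_mem_nearRatioBall hs))) (by norm_num) (by decide +kernel)
  rw [three_mul_sub_one_sub, norm_mul, norm_ofNat, three_mul_sub_one_re, three_mul_sub_one_re]
    at schwarzPick
  push_cast at factor_le
  nlinarith [norm_nonneg (chiRatio (3 * s - 1) - chiRatio (3 * rhoCenter - 1)),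
    norm_nonneg (s - rhoCenter)]

lemma half_mul_norm_sub_le_norm_reducedF_sub (hs : s ∈ rhoBall) :
    1 / 2 * ‖s - rhoCenter‖ ≤ ‖reducedF s - reducedF rhoCenter‖ := by
  have v_mem := chiRatio_three_mul_mem_nearRatioBall hs
  have sub_two_mem := sub_mem_sub hs (natCast_mul_mem_smul 2 one_mem_one)
  have add_one_mem := add_mem_add hs one_mem_one
  have slope_ge := div_le_norm_of_mem (m := 23) (n := 10)
    (homogFSlope_mem_homogFSlopeBall hs rhoCenter_mem_rhoPoint chiRatio_rhoCenter_mem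
      chiRatio_three_mul_rhoCenter_mem) (by norm_num) (by decide +kernel)
  have u_coeff_le := norm_le_div_of_mem (m := 14) (n := 1)
    (mul_mem_mul sub_two_mem (add_mem_add (natCast_mul_mem_smul 2 (sub_mem_sub hs one_mem_one))
      (mul_mem_mul add_one_mem v_mem))) one_pos (by decide +kernel)
  have v_coeff_le := norm_le_div_of_mem (m := 65) (n := 10)
    (mul_mem_mul chiRatio_rhoCenter_mem (mul_mem_mul add_one_mem sub_two_mem))
    (by norm_num) (by decide +kernel)
  have u_sub_le := norm_chiRatio_sub_rhoCenter_le hs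
  have v_sub_le := norm_chiRatio_three_mul_sub_rhoCenter_le hs
  push_cast at slope_ge u_coeff_le v_coeff_le
  rw [reducedF, reducedF, homogF_sub_homogF]
  refine le_trans ?_ (norm_sub_norm_le _ _)
  refine le_trans ?_ (sub_le_sub_right (norm_sub_norm_le _ _) _)
  rw [norm_mul (s - rhoCenter), norm_mul (chiRatio s - _), norm_mul (chiRatio (3 * s - 1) - _)]
  have main_term := mul_le_mul_of_nonneg_left slope_ge (norm_nonneg (s - rhoCenter))
  have u_term := mul_le_mul u_sub_le u_coeff_le (norm_nonneg _) (by positivity)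
  have v_term := mul_le_mul v_sub_le v_coeff_le (norm_nonneg _) (by positivity)
  linarith [norm_nonneg (s - rhoCenter)]

lemma norm_reducedF_rhoCenter_le : ‖reducedF rhoCenter‖ ≤ 2 / 1000 :=
  norm_le_div_of_mem (homogF_mem_homogFBall rhoCenter_mem_rhoPoint one_mem_one
    chiRatio_rhoCenter_mem chiRatio_three_mul_rhoCenter_mem) (by norm_num) (by decide +kernel)

lemma differentiableAt_reducedF (hs : 1 / 3 ≤ s.re) : DifferentiableAt ℂ reducedF s := by
  have ratio : DifferentiableAt ℂ chiRatio s := differentiableAt_chiRatio (by linarith)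
  have ratio' : DifferentiableAt ℂ (fun z ↦ chiRatio (3 * z - 1)) s :=
    (differentiableAt_chiRatio (by rw [three_mul_sub_one_re]; linarith)).fun_comp' s (by fun_prop)
  unfold reducedF homogF
  fun_prop

lemma exists_mem_rhoBall_reducedF_eq_zero : ∃ ρ ∈ rhoBall, reducedF ρ = 0 := by
  have rad_pos : (0 : ℝ) < rhoBall.rad / scale := by norm_num [rhoBall, scale]
  have mem_iff {z : ℂ} : z ∈ rhoBall ↔ z ∈ Metric.closedBall rhoCenter (rhoBall.rad / scale) := by
    rw [mem_closedBall_iff_norm]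
    exact mem_iff_norm_sub_le
  have diffContOnCl : DiffContOnCl ℂ reducedF (Metric.ball rhoCenter (rhoBall.rad / scale)) := by
    refine DifferentiableOn.diffContOnCl fun z hz ↦
      (differentiableAt_reducedF ?_).differentiableWithinAt
    rw [closure_ball _ rad_pos.ne', ← mem_iff] at hz
    linarith [lt_re_of_mem_rhoBall hz]
  obtain ⟨ρ, hρ, root⟩ := exists_eq_zero_of_mul_norm_sub_le rad_pos one_half_pos diffContOnCl
    (fun z hz ↦ half_mul_norm_sub_le_norm_reducedF_sub (mem_iff.2 hz))
    (norm_reducedF_rhoCenter_le.trans_lt (by norm_num [rhoBall, scale]))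
  exact ⟨ρ, mem_iff.2 hρ, root⟩

end ZeroExistence

section HalfPlane

variable {g : ℂ → ℂ} {s : ℂ} {c C R : ℝ}

lemma re_nonneg_of_re_nonneg_on_line (hg : ∀ z, c ≤ z.re → DifferentiableAt ℂ g z)
    (bounded : ∀ z, c ≤ z.re → R ≤ ‖z‖ → ‖g z‖ ≤ C) (line : ∀ z, z.re = c → 0 ≤ (g z).re)
    (hs : c ≤ s.re) : 0 ≤ (g s).re := by
  have exp_bounded (z : ℂ) (hz : 0 ≤ z.re) (le_norm : R + |c| ≤ ‖z‖) :
      ‖exp (-g (c + z))‖ ≤ Real.exp C := by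
    rw [norm_exp, Real.exp_le_exp]
    refine (re_le_norm _).trans ?_
    rw [norm_neg]
    refine bounded _ (by simpa using hz) ?_
    have := norm_sub_le (c + z) c
    rw [add_sub_cancel_left, norm_real, Real.norm_eq_abs] at this
    linarith
  have diffContOnCl : DiffContOnCl ℂ (fun z ↦ exp (-g (c + z))) {z | 0 < z.re} := by
    refine DifferentiableOn.diffContOnCl fun z hz ↦ ?_
    rw [closure_setOfPred_lt_re] at hz
    have : DifferentiableAt ℂ (fun z ↦ g (c + z)) z :=
      (hg _ (by simpa using hz)).fun_comp' z (by fun_prop)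
    exact this.neg.cexp.differentiableWithinAt
  have norm_exp_le := PhragmenLindelof.right_half_plane_of_bounded_on_real (C := 1) (z := s - c)
    diffContOnCl
    ⟨0, two_pos, 0, Asymptotics.IsBigO.of_bound (Real.exp C) (by
      rw [Filter.eventually_inf_principal]
      filter_upwards [(tendsto_norm_cobounded_atTop (E := ℂ)).eventually_ge_atTop (R + |c|)]
        with z le_norm hz
      simpa using exp_bounded z (le_of_lt hz) le_norm)⟩
    ⟨Real.exp C, Filter.eventually_map.2 (by
      filter_upwards [Filter.eventually_ge_atTop 0, Filter.eventually_ge_atTop (R + |c|)]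
        with x hx le_x
      exact exp_bounded x (by simpa using hx) (by simpa [abs_of_nonneg hx] using le_x))⟩
    (fun x ↦ by simpa [norm_exp] using line (c + x * I) (by simp))
    (by simpa using hs)
  simpa [norm_exp] using norm_exp_le

lemma ne_zero_of_re_pos_on_line (hg : ∀ z, c ≤ z.re → DifferentiableAt ℂ g z)
    (bounded : ∀ z, c ≤ z.re → R ≤ ‖z‖ → ‖g z‖ ≤ C) (line : ∀ z, z.re = c → 0 < (g z).re)
    (hs : c ≤ s.re) : g s ≠ 0 := by
  intro root
  rcases hs.eq_or_lt with on_line | interior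
  · simpa [root] using line s on_line.symm
  have diffContOnCl : DiffContOnCl ℂ (fun z ↦ exp (-g z)) {z | c < z.re} := by
    refine DifferentiableOn.diffContOnCl fun z hz ↦ ?_
    rw [closure_setOfPred_lt_re] at hz
    exact (hg z hz).neg.cexp.differentiableWithinAt
  have isMaxOn : IsMaxOn (norm ∘ fun z ↦ exp (-g z)) {z | c < z.re} s := by
    intro z hz
    simpa [root, norm_exp] using
      re_nonneg_of_re_nonneg_on_line hg bounded (fun z hz ↦ (line z hz).le) (le_of_lt hz)
  have constant := eqOn_closure_of_isPreconnected_of_isMaxOn_norm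
    (convex_halfSpace_re_gt c).isPreconnected (isOpen_lt continuous_const continuous_re)
    diffContOnCl interior isMaxOn
  have exp_eq_one : exp (-g c) = 1 := by
    simpa [root] using constant (x := c) (by simp [closure_setOfPred_lt_re])
  have norm_eq_one := congrArg norm exp_eq_one
  rw [norm_exp, norm_one, Real.exp_eq_one_iff, neg_re, neg_eq_zero] at norm_eq_one
  exact (line c (ofReal_re c)).ne' norm_eq_one

end HalfPlane

section Quotient

open DyadicBall

variable {ρ s : ℂ}

/-- The quotient of `reducedF` by `comparisonCubic ρ`, extended to the zeros `ρ` and `conj ρ` by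
divided differences. -/
noncomputable def cubicQuotient (ρ s : ℂ) : ℂ :=
  dslope (dslope reducedF ρ) (starRingEnd ℂ ρ) s / (s + 5)

lemma add_five_ne_zero (hs : 0 ≤ s.re) : s + 5 ≠ 0 := by
  intro eq_zero
  have := congrArg Complex.re eq_zero
  norm_num at this
  linarith

lemma im_pos_of_mem_rhoBall (hρ : ρ ∈ rhoBall) : 0 < ρ.im := by
  linarith [(abs_le.1 (abs_sub_le_of_mem_rhoBall hρ).2).1]

lemma conj_ne_self_of_im_pos (hρ : 0 < ρ.im) : starRingEnd ℂ ρ ≠ ρ :=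
  fun h ↦ hρ.ne' (conj_eq_iff_im.1 h)

lemma differentiableAt_cubicQuotient (hρ : 1 / 2 ≤ ρ.re) (hs : 1 / 2 ≤ s.re) :
    DifferentiableAt ℂ (cubicQuotient ρ) s := by
  have mem_nhds {z : ℂ} (hz : 1 / 2 ≤ z.re) : {z : ℂ | 1 / 3 < z.re} ∈ nhds z :=
    (isOpen_lt continuous_const continuous_re).mem_nhds (lt_of_lt_of_le (by norm_num) hz)
  have slope_differentiableOn : DifferentiableOn ℂ
      (dslope (dslope reducedF ρ) (starRingEnd ℂ ρ)) {z | 1 / 3 < z.re} := by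
    rw [differentiableOn_dslope (mem_nhds (by simpa using hρ)),
      differentiableOn_dslope (mem_nhds hρ)]
    exact fun z hz ↦ (differentiableAt_reducedF (le_of_lt hz)).differentiableWithinAt
  exact (slope_differentiableOn.differentiableAt (mem_nhds hs)).fun_div (by fun_prop)
    (add_five_ne_zero (by linarith))

lemma cubicQuotient_mul_comparisonCubic (root : reducedF ρ = 0) (hρ : starRingEnd ℂ ρ ≠ ρ)
    (hs : 0 ≤ s.re) : cubicQuotient ρ s * comparisonCubic ρ s 1 = reducedF s := by
  have add_five_ne := add_five_ne_zero hs
  have eq_mul_slope (z : ℂ) : reducedF z = (z - ρ) * dslope reducedF ρ z := by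
    rw [← smul_eq_mul, sub_smul_dslope, root, sub_zero]
  have slope_conj : dslope reducedF ρ (starRingEnd ℂ ρ) = 0 := by
    have := eq_mul_slope (starRingEnd ℂ ρ)
    rw [reducedF_conj, root, map_zero, eq_comm, mul_eq_zero] at this
    exact this.resolve_left (sub_ne_zero.2 hρ)
  have slope_eq_mul := sub_smul_dslope (dslope reducedF ρ) (starRingEnd ℂ ρ) s
  rw [slope_conj, sub_zero, smul_eq_mul] at slope_eq_mul
  rw [eq_mul_slope, ← slope_eq_mul, cubicQuotient, comparisonCubic]
  field_simp

lemma re_cubicQuotient_pos (hρ : ρ ∈ rhoBall) (root : reducedF ρ = 0) (hs : s.re = 1 / 2) :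
    0 < (cubicQuotient ρ s).re := by
  have pos := re_reducedF_mul_conj_pos hρ s.im
  have s_eq : 1 / 2 + s.im * I = s := by
    rw [← re_add_im s, hs]
    simp
  rw [s_eq, ← cubicQuotient_mul_comparisonCubic root
      (conj_ne_self_of_im_pos (im_pos_of_mem_rhoBall hρ)) (by linarith), mul_assoc, mul_conj,
    re_mul_ofReal] at pos
  exact pos_of_mul_pos_left pos (normSq_nonneg _)

lemma norm_A_le_one : ‖A‖ ≤ 1 := by
  have A_eq : A = (Real.pi / 3 - 1 : ℝ) := by simp [A]
  rw [A_eq, norm_real, Real.norm_eq_abs, abs_le]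
  constructor <;> linarith [Real.pi_gt_three, Real.pi_lt_four]

lemma norm_reducedF_le (hs : 1 / 2 ≤ s.re) (le_norm : 10 ≤ ‖s‖) : ‖reducedF s‖ ≤ 36 * ‖s‖ ^ 3 := by
  have u_le := norm_chiRatio_le_one (s := s) (by linarith)
  have v_le := norm_chiRatio_le_one (s := 3 * s - 1) (by rw [three_mul_sub_one_re]; linarith)
  have sub_one_le : ‖s - 1‖ ≤ 2 * ‖s‖ := (norm_sub_le _ _).trans (by rw [norm_one]; linarith)
  have add_one_le : ‖s + 1‖ ≤ 2 * ‖s‖ := (norm_add_le _ _).trans (by rw [norm_one]; linarith)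
  have sub_two_le : ‖s - 2 * 1‖ ≤ 2 * ‖s‖ :=
    (norm_sub_le _ _).trans (by norm_num; linarith)
  have three_mul_le : ‖3 * s - 2 * 1‖ ≤ 4 * ‖s‖ :=
    (norm_sub_le _ _).trans (by norm_num; linarith)
  have A_factor_le : ‖1 + A * (s - 1)‖ ≤ 3 * ‖s‖ :=
    calc ‖1 + A * (s - 1)‖ ≤ 1 + ‖A‖ * ‖s - 1‖ := by
          simpa using norm_add_le 1 (A * (s - 1))
      _ ≤ 1 + 1 * (2 * ‖s‖) := by gcongr; exact norm_A_le_one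
      _ ≤ 3 * ‖s‖ := by linarith
  have v_factor_le : ‖2 * (s - 1) + (s + 1) * chiRatio (3 * s - 1)‖ ≤ 6 * ‖s‖ :=
    calc ‖2 * (s - 1) + (s + 1) * chiRatio (3 * s - 1)‖
        ≤ 2 * ‖s - 1‖ + ‖s + 1‖ * ‖chiRatio (3 * s - 1)‖ := by
          simpa using norm_add_le (2 * (s - 1)) ((s + 1) * chiRatio (3 * s - 1))
      _ ≤ 2 * (2 * ‖s‖) + 2 * ‖s‖ * 1 := by gcongr
      _ = 6 * ‖s‖ := by ring
  calc ‖reducedF s‖ ≤ ‖s - 1‖ * ‖3 * s - 2 * 1‖ * ‖1 + A * (s - 1)‖ +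
        1 * (‖s - 2 * 1‖ * ‖chiRatio s‖) * ‖2 * (s - 1) + (s + 1) * chiRatio (3 * s - 1)‖ := by
        rw [reducedF, homogF]
        refine (norm_sub_le _ _).trans_eq ?_
        simp only [norm_mul, norm_one]
    _ ≤ 2 * ‖s‖ * (4 * ‖s‖) * (3 * ‖s‖) + 1 * (2 * ‖s‖ * 1) * (6 * ‖s‖) := by gcongr
    _ = 24 * ‖s‖ ^ 3 + 12 * ‖s‖ ^ 2 * 1 := by ring
    _ ≤ 24 * ‖s‖ ^ 3 + 12 * ‖s‖ ^ 2 * ‖s‖ := by gcongr; linarith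
    _ = 36 * ‖s‖ ^ 3 := by ring

lemma le_norm_comparisonCubic (hρ : ‖ρ‖ ≤ 5) (le_norm : 10 ≤ ‖s‖) :
    (‖s‖ / 2) ^ 3 ≤ ‖comparisonCubic ρ s 1‖ := by
  have half_le {z : ℂ} (hz : ‖z‖ ≤ 5) : ‖s‖ / 2 ≤ ‖s - z‖ := by
    linarith [norm_sub_norm_le s z]
  have conj_le : ‖s‖ / 2 ≤ ‖s - starRingEnd ℂ ρ‖ := half_le (by rwa [norm_conj])
  have five_le : ‖s‖ / 2 ≤ ‖s + 5‖ := by simpa using half_le (z := -5) (by norm_num)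
  calc (‖s‖ / 2) ^ 3 = ‖s‖ / 2 * (‖s‖ / 2) * (‖s‖ / 2) := by ring
    _ ≤ ‖s - ρ‖ * ‖s - starRingEnd ℂ ρ‖ * ‖s + 5‖ := by gcongr; exact half_le hρ
    _ = ‖comparisonCubic ρ s 1‖ := by simp only [comparisonCubic, norm_mul, mul_one]

lemma norm_cubicQuotient_le (hρ : ρ ∈ rhoBall) (root : reducedF ρ = 0) (hs : 1 / 2 ≤ s.re)
    (le_norm : 10 ≤ ‖s‖) : ‖cubicQuotient ρ s‖ ≤ 288 := by
  have norm_ρ_le : ‖ρ‖ ≤ 5 := by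
    simpa using norm_le_div_of_mem (m := 5) (n := 1) hρ one_pos (by decide +kernel)
  refine le_of_mul_le_mul_right (a := (‖s‖ / 2) ^ 3) ?_ (by positivity)
  calc ‖cubicQuotient ρ s‖ * (‖s‖ / 2) ^ 3 ≤ ‖cubicQuotient ρ s‖ * ‖comparisonCubic ρ s 1‖ := by
        gcongr
        exact le_norm_comparisonCubic norm_ρ_le le_norm
    _ = ‖reducedF s‖ := by
        rw [← norm_mul, cubicQuotient_mul_comparisonCubic root
          (conj_ne_self_of_im_pos (im_pos_of_mem_rhoBall hρ)) (by linarith)]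
    _ ≤ 36 * ‖s‖ ^ 3 := norm_reducedF_le hs le_norm
    _ = 288 * (‖s‖ / 2) ^ 3 := by ring

lemma cubicQuotient_ne_zero (hρ : ρ ∈ rhoBall) (root : reducedF ρ = 0) (hs : 1 / 2 ≤ s.re) :
    cubicQuotient ρ s ≠ 0 := by
  have hρ' := lt_re_of_mem_rhoBall hρ
  exact ne_zero_of_re_pos_on_line (fun z ↦ differentiableAt_cubicQuotient (by linarith))
    (fun z ↦ norm_cubicQuotient_le hρ root) (fun z ↦ re_cubicQuotient_pos hρ root) hs

end Quotient

section Zeros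

open DyadicBall

variable {ρ s : ℂ}

lemma deriv_sub_mul {𝕜 : Type*} [NontriviallyNormedField 𝕜] {g : 𝕜 → 𝕜} {a : 𝕜}
    (hg : DifferentiableAt 𝕜 g a) : deriv (fun x ↦ (x - a) * g x) a = g a := by
  simpa using (((hasDerivAt_id a).sub_const a).fun_mul hg.hasDerivAt).deriv

lemma f1_conj (s : ℂ) : f1 (starRingEnd ℂ s) = starRingEnd ℂ (f1 s) := by
  simp only [f1, map_mul, map_sub, map_add, map_one, map_ofNat, A_conj, ← chi_conj]

lemma deriv_f1_conj (s : ℂ) : deriv f1 (starRingEnd ℂ s) = starRingEnd ℂ (deriv f1 s) := by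
  have symm : starRingEnd ℂ ∘ f1 ∘ starRingEnd ℂ = f1 := by
    ext z
    simp [f1_conj]
  have := congrFun (deriv_conj_conj (f := f1)) (starRingEnd ℂ s)
  simpa [symm] using this

lemma chi_mul_chi_ne_zero (hs : 1 / 3 ≤ s.re) : chi (s + 1) * chi (3 * s) ≠ 0 :=
  mul_ne_zero (chi_add_one_ne_zero (by linarith))
    (chi_ne_zero_of_one_le_re (by norm_num; linarith))

lemma f1_eq_mul_reducedF (hs : 1 / 3 ≤ s.re) :
    f1 s = (s - 1) * (chi (s + 1) * chi (3 * s)) * reducedF s := by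
  obtain ⟨chi_add_one_ne, chi_three_mul_ne⟩ := mul_ne_zero_iff.1 (chi_mul_chi_ne_zero hs)
  rw [f1, reducedF, homogF, chiRatio, chiRatio, sub_add_cancel]
  generalize chi (3 * s) = chiThree at *
  field_simp
  ring

lemma f1_eq_mul_cubicQuotient (hρ : ρ ∈ rhoBall) (root : reducedF ρ = 0) (hs : 1 / 3 ≤ s.re) :
    f1 s = (s - ρ) * ((s - 1) * (chi (s + 1) * chi (3 * s)) *
      (cubicQuotient ρ s * ((s - starRingEnd ℂ ρ) * (s + 5)))) := by
  rw [f1_eq_mul_reducedF hs, ← cubicQuotient_mul_comparisonCubic root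
    (conj_ne_self_of_im_pos (im_pos_of_mem_rhoBall hρ)) (by linarith), comparisonCubic]
  ring

lemma f1_eq_zero_iff (hρ : ρ ∈ rhoBall) (root : reducedF ρ = 0) (hs : 1 / 2 ≤ s.re) :
    f1 s = 0 ↔ s = 1 ∨ s = ρ ∨ s = starRingEnd ℂ ρ := by
  have chi_ne := chi_mul_chi_ne_zero (s := s) (by linarith)
  have quotient_ne := cubicQuotient_ne_zero hρ root hs
  have add_five_ne := add_five_ne_zero (s := s) (by linarith)
  rw [f1_eq_mul_cubicQuotient hρ root (by linarith)]
  simp only [mul_eq_zero, sub_eq_zero, quotient_ne, add_five_ne, mul_eq_zero.not.1 chi_ne,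
    false_or, or_false]
  tauto

lemma setOf_f1_eq_zero (hρ : ρ ∈ rhoBall) (root : reducedF ρ = 0) :
    {s : ℂ | 1 / 2 ≤ s.re ∧ f1 s = 0} = {1, ρ, starRingEnd ℂ ρ} := by
  have hρ' := lt_re_of_mem_rhoBall hρ
  ext s
  refine ⟨fun ⟨hs, zero⟩ ↦ (f1_eq_zero_iff hρ root hs).1 zero, fun mem ↦ ?_⟩
  have hs : 1 / 2 ≤ s.re := by
    rcases mem with rfl | rfl | rfl
    · norm_num
    · linarith
    · rw [conj_re]
      linarith
  exact ⟨hs, (f1_eq_zero_iff hρ root hs).2 mem⟩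

lemma deriv_f1_one_ne_zero : deriv f1 1 ≠ 0 := by
  have chi_one_ne : chi 1 ≠ 0 := chi_ne_zero_of_one_le_re (by simp)
  have chi_two_ne : chi 2 ≠ 0 := chi_ne_zero_of_one_le_re (by simp)
  have := differentiable_chi
  unfold f1
  rw [deriv_sub_mul (by fun_prop)]
  norm_num [chi_one_ne, chi_two_ne]

lemma deriv_f1_ne_zero (hρ : ρ ∈ rhoBall) (root : reducedF ρ = 0) : deriv f1 ρ ≠ 0 := by
  have hρ' := lt_re_of_mem_rhoBall hρ
  have im_pos := im_pos_of_mem_rhoBall hρ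
  have ρ_ne_one : ρ ≠ 1 := by
    rintro rfl
    simp at im_pos
  have factorization : f1 =ᶠ[nhds ρ] fun s ↦ (s - ρ) * ((s - 1) * (chi (s + 1) * chi (3 * s)) *
      (cubicQuotient ρ s * ((s - starRingEnd ℂ ρ) * (s + 5)))) := by
    have lt_re : ∀ᶠ s : ℂ in nhds ρ, 1 / 3 < s.re :=
      (isOpen_lt continuous_const continuous_re).mem_nhds (by norm_num; linarith)
    filter_upwards [lt_re] with s hs using f1_eq_mul_cubicQuotient hρ root hs.le
  have := differentiable_chi
  have := differentiableAt_cubicQuotient (ρ := ρ) (s := ρ) (by linarith) (by linarith)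
  rw [factorization.deriv_eq, deriv_sub_mul (by fun_prop)]
  exact mul_ne_zero
    (mul_ne_zero (sub_ne_zero.2 ρ_ne_one) (chi_mul_chi_ne_zero (by linarith)))
    (mul_ne_zero (cubicQuotient_ne_zero hρ root (by linarith))
      (mul_ne_zero (sub_ne_zero.2 (conj_ne_self_of_im_pos im_pos).symm)
        (add_five_ne_zero (by linarith))))

end Zeros

theorem f1_zeros_right_halfplane :
    ∃ ρ₀ : ℂ, (0.85 : ℝ) < ρ₀.re ∧ ρ₀.re < (0.95 : ℝ) ∧
      (2.0 : ℝ) < ρ₀.im ∧ ρ₀.im < (2.2 : ℝ) ∧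
      {s : ℂ | 1 / 2 ≤ s.re ∧ f1 s = 0} = {1, ρ₀, (starRingEnd ℂ) ρ₀} ∧
      deriv f1 1 ≠ 0 ∧ deriv f1 ρ₀ ≠ 0 ∧ deriv f1 ((starRingEnd ℂ) ρ₀) ≠ 0 := by
  obtain ⟨ρ, hρ, root⟩ := exists_mem_rhoBall_reducedF_eq_zero
  have close := DyadicBall.abs_sub_le_of_mem_rhoBall hρ
  rw [abs_le, abs_le] at close
  have deriv_ne := deriv_f1_ne_zero hρ root
  refine ⟨ρ, by linarith, by linarith, by linarith, by linarith, setOf_f1_eq_zero hρ root,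
    deriv_f1_one_ne_zero, deriv_ne, ?_⟩
  rw [deriv_f1_conj]
  exact (map_ne_zero _).2 deriv_ne
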